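/- arXiv:2303.07954 — 9 statements merged into one kernel-verified Lean document; each statement's English description precedes it below -/
import Mathlib

section
/- Let Ω be a locally compact Hausdorff topological space with Borel σ-algebra B. Let m and m_n (n ∈ ℕ) be finite nonnegative Borel measures on Ω, with m Radon (inner regular with respect to compact sets). If the sequence (m_n) is uniformly absolutely continuous with respect to m and (m_n) converges vaguely to m, then (m_n) converges weakly to m. -/
open MeasureTheory Filter Topology

theorem vw_aux {Ω : Type*} [TopologicalSpace Ω] [MeasurableSpace Ω] [BorelSpace Ω]
    (μ : Measure Ω) [IsFiniteMeasure μ] (g f : Ω → ℝ) (hg : Continuous g) (hf : Continuous f)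
    (C : ℝ) (hC : 0 < C) (hgC : ∀ x, |g x| ≤ C) (hf01 : ∀ x, f x ∈ Set.Icc (0 : ℝ) 1)
    (K : Set Ω) (hfK : Set.EqOn f 1 K) (η : ℝ) (hη : 0 < η)
    (hK : μ Kᶜ < ENNReal.ofReal η) :
    |∫ x, g x ∂μ - ∫ x, g x * f x ∂μ| ≤ C * η := by
  have hgi : Integrable g μ :=
    Integrable.of_bound hg.aestronglyMeasurable C (Eventually.of_forall hgC)
  have hgfi : Integrable (fun x => g x * f x) μ := by
    refine Integrable.of_bound (hg.mul hf).aestronglyMeasurable C (Eventually.of_forall ?_)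
    intro x
    rw [Real.norm_eq_abs, abs_mul, abs_of_nonneg (hf01 x).1]
    exact (mul_le_of_le_one_right (abs_nonneg _) (hf01 x).2).trans (hgC x)
  rw [← integral_sub hgi hgfi]
  rw [← setIntegral_eq_integral_of_forall_compl_eq_zero (s := Kᶜ)]
  · have h1 : ‖∫ x in Kᶜ, (g x - g x * f x) ∂μ‖ ≤ C * μ.real Kᶜ := by
      apply norm_setIntegral_le_of_norm_le_const (measure_lt_top _ _)
      intro x _
      have : g x - g x * f x = g x * (1 - f x) := by ring
      rw [this, Real.norm_eq_abs, abs_mul, abs_of_nonneg (sub_nonneg.2 (hf01 x).2)]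
      exact (mul_le_of_le_one_right (abs_nonneg _) (by linarith [(hf01 x).1])).trans (hgC x)
    refine h1.trans (mul_le_mul_of_nonneg_left ?_ hC.le)
    exact ENNReal.toReal_le_of_le_ofReal hη.le hK.le
  · intro x hx
    have hx' : x ∈ K := by simpa using hx
    simp [hfK hx']

/-- If `(mₙ)` is a sequence of finite Borel measures on a locally compact Hausdorff space,
uniformly absolutely continuous with respect to a finite Radon measure `m` and vaguely
convergent to `m`, then `(mₙ)` converges weakly to `m`. -/
theorem vague_to_weak_of_unifAC
    {Ω : Type*} [TopologicalSpace Ω] [LocallyCompactSpace Ω] [T2Space Ω]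
    [MeasurableSpace Ω] [BorelSpace Ω]
    (m : Measure Ω) (mseq : ℕ → Measure Ω)
    [IsFiniteMeasure m] (hfin : ∀ n, IsFiniteMeasure (mseq n))
    (hRadon : m.InnerRegular)
    (huac : ∀ ε : ℝ, 0 < ε → ∃ δ : ℝ, 0 < δ ∧ ∀ E : Set Ω, MeasurableSet E →
      m E < ENNReal.ofReal δ → ∀ n, mseq n E < ENNReal.ofReal ε)
    (hvague : ∀ g : Ω → ℝ, Continuous g → Tendsto g (cocompact Ω) (𝓝 0) →
      Tendsto (fun n => ∫ x, g x ∂(mseq n)) atTop (𝓝 (∫ x, g x ∂m))) :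
    ∀ g : Ω → ℝ, Continuous g → (∃ C : ℝ, ∀ x, |g x| ≤ C) →
      Tendsto (fun n => ∫ x, g x ∂(mseq n)) atTop (𝓝 (∫ x, g x ∂m)) := by
  rintro g hg ⟨C₀, hC₀⟩
  obtain ⟨C, hC, hgC⟩ : ∃ C : ℝ, 0 < C ∧ ∀ x, |g x| ≤ C :=
    ⟨|C₀| + 1, by positivity, fun x => (hC₀ x).trans (by linarith [le_abs_self C₀])⟩
  rw [Metric.tendsto_atTop]
  intro ε hε
  have hη : 0 < ε / (4 * C) := by positivity
  obtain ⟨δ, hδ, hE⟩ := huac _ hη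
  have hmin : 0 < min δ (ε / (4 * C)) := lt_min hδ hη
  obtain ⟨K, -, hK, hKm⟩ := MeasurableSet.univ.exists_isCompact_diff_lt (μ := m)
    (measure_ne_top _ _) (ENNReal.ofReal_pos.2 hmin).ne'
  rw [← Set.compl_eq_univ_diff] at hKm
  obtain ⟨f, hfK, -, hfc, hf01⟩ := exists_continuous_one_zero_of_isCompact hK isClosed_empty
    (Set.disjoint_empty K)
  have hv := hvague (fun x => g x * f x) (hg.mul f.continuous)
    ((hfc.mul_left (f := g)).is_zero_at_infty)
  rw [Metric.tendsto_atTop] at hv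
  obtain ⟨N, hN⟩ := hv (ε / 4) (by positivity)
  have hCe : C * (ε / (4 * C)) = ε / 4 := by field_simp
  have hm := vw_aux m g f hg f.continuous C hC hgC hf01 K hfK _ hη
    (hKm.trans_le (ENNReal.ofReal_le_ofReal (min_le_right _ _)))
  refine ⟨N, fun n hn => ?_⟩
  haveI := hfin n
  have hn1 := vw_aux (mseq n) g f hg f.continuous C hC hgC hf01 K hfK _ hη
    (hE Kᶜ hK.measurableSet.compl
      (hKm.trans_le (ENNReal.ofReal_le_ofReal (min_le_left _ _))) n)
  have h2 := hN n hn
  rw [Real.dist_eq] at h2 ⊢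
  rw [hCe] at hm hn1
  rw [abs_le] at hm hn1
  rw [abs_lt] at h2 ⊢
  constructor <;> linarith [hm.1, hm.2, hn1.1, hn1.2, h2.1, h2.2]
end

section
/- Let Ω be a locally compact Hausdorff topological space with Borel σ-algebra B. Let m and m_n (n ∈ ℕ) be finite nonnegative Borel measures on Ω, with m Radon (inner regular with respect to compact sets). Assume m_n ≤ m for every n (i.e., m_n(E) ≤ m(E) for every Borel set E) and that (m_n) converges vaguely to m. Then for every f ∈ L¹(m) and every Borel set A, lim_n ∫_A f dm_n = ∫_A f dm. In particular (m_n) converges setwisely to m, i.e., lim_n m_n(A) = m(A) for every Borel set A. -/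
open MeasureTheory Filter Topology

/-- If `(mₙ)` are finite Borel measures on a locally compact Hausdorff space with `mₙ ≤ m`
for a finite Radon measure `m`, and `(mₙ)` converges vaguely to `m`, then for every
`f ∈ L¹(m)` and every Borel set `A`, `∫_A f dmₙ → ∫_A f dm`; in particular `(mₙ)`
converges setwisely to `m`. -/
theorem tendsto_setIntegral_of_le_of_vague
    {Ω : Type*} [TopologicalSpace Ω] [LocallyCompactSpace Ω] [T2Space Ω]
    [MeasurableSpace Ω] [BorelSpace Ω]
    (m : Measure Ω) (mseq : ℕ → Measure Ω)
    [IsFiniteMeasure m] (hfin : ∀ n, IsFiniteMeasure (mseq n))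
    (hRadon : m.InnerRegular)
    (hle : ∀ n, ∀ E : Set Ω, MeasurableSet E → mseq n E ≤ m E)
    (hvague : ∀ g : Ω → ℝ, Continuous g → Tendsto g (cocompact Ω) (𝓝 0) →
      Tendsto (fun n => ∫ x, g x ∂(mseq n)) atTop (𝓝 (∫ x, g x ∂m))) :
    (∀ f : Ω → ℝ, Integrable f m → ∀ A : Set Ω, MeasurableSet A →
      Tendsto (fun n => ∫ x in A, f x ∂(mseq n)) atTop (𝓝 (∫ x in A, f x ∂m))) ∧
    (∀ A : Set Ω, MeasurableSet A → Tendsto (fun n => mseq n A) atTop (𝓝 (m A))) := by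
  have hle' : ∀ n, mseq n ≤ m := fun n => Measure.le_iff.2 (hle n)
  have hReg : m.Regular := inferInstance
  -- setwise convergence, in real form
  have hset : ∀ A : Set Ω, MeasurableSet A →
      Tendsto (fun n => (mseq n).real A) atTop (𝓝 (m.real A)) := by
    intro A hA
    rw [Metric.tendsto_atTop]
    intro ε hε
    have hε' : ENNReal.ofReal (ε / 4) ≠ 0 := by simpa using by positivity
    obtain ⟨K, hKA, hK, hmK⟩ := hA.exists_isCompact_sdiff_lt (measure_ne_top m A) hε'
    obtain ⟨U, hKU, hU, hmU⟩ := hK.exists_isOpen_lt_add (μ := m) hε'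
    obtain ⟨g, hg1, hg0, hgs, hg01⟩ := exists_continuous_one_zero_of_isCompact hK
      hU.isClosed_compl (Set.disjoint_compl_right_iff_subset.2 hKU)
    have hgint : Integrable g m := g.continuous.integrable_of_hasCompactSupport hgs
    have hmK' : m.real (A \ K) < ε / 4 := ENNReal.toReal_lt_of_lt_ofReal hmK
    have hmU' : m.real (U \ K) < ε / 4 := ENNReal.toReal_lt_of_lt_ofReal
      (measure_sdiff_lt_of_lt_add hK.measurableSet.nullMeasurableSet hKU
        (measure_ne_top m K) hmU)
    have hlow : m.real K ≤ ∫ x, g x ∂m := by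
      rw [← integral_indicator_one hK.measurableSet]
      refine integral_mono ((integrable_const (1 : ℝ)).indicator hK.measurableSet) hgint ?_
      intro x
      by_cases hx : x ∈ K
      · simp [hx, hg1 hx]
      · simpa [hx] using (hg01 x).1
    have hup : ∀ n, ∫ x, g x ∂(mseq n) ≤ (mseq n).real U := by
      intro n
      rw [← integral_indicator_one hU.measurableSet]
      refine integral_mono (hgint.mono_measure (hle' n))
        ((integrable_const (1 : ℝ)).indicator hU.measurableSet) ?_
      intro x
      by_cases hx : x ∈ U
      · simpa [hx] using (hg01 x).2
      · simp [hx, hg0 hx]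
    have hreal : ∀ n E, (mseq n).real E ≤ m.real E := fun n E =>
      ENNReal.toReal_mono (measure_ne_top m E) (hle' n E)
    have hv := hvague g g.continuous hgs.is_zero_at_infty
    rw [Metric.tendsto_atTop] at hv
    obtain ⟨N, hN⟩ := hv (ε / 4) (by positivity)
    refine ⟨N, fun n hn => ?_⟩
    have h1 := hN n hn
    rw [Real.dist_eq, abs_lt] at h1
    have h2 := hup n
    have h3 := hreal n (U \ K)
    have h4 := hreal n A
    have h5 : (mseq n).real K ≤ (mseq n).real A := measureReal_mono hKA
    have h6 := measureReal_sdiff_add_inter (μ := mseq n) (s := U) hK.measurableSet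
    have h7 := measureReal_sdiff_add_inter (μ := m) (s := A) hK.measurableSet
    rw [Set.inter_eq_self_of_subset_right hKU] at h6
    rw [Set.inter_eq_self_of_subset_right hKA] at h7
    rw [Real.dist_eq, abs_lt]
    constructor <;> linarith [h1.1, h1.2]
  have key : ∀ f : Ω → ℝ, Integrable f m →
      Tendsto (fun n => ∫ x, f x ∂(mseq n)) atTop (𝓝 (∫ x, f x ∂m)) := by
    intro f hf
    rw [Metric.tendsto_atTop]
    intro ε hε
    have hε' : ENNReal.ofReal (ε / 4) ≠ 0 := by simpa using by positivity
    obtain ⟨g, hgi', hgint, hg0⟩ := (memLp_one_iff_integrable.2 hf).induction_dense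
      ENNReal.one_ne_top
      (fun g => Integrable g m ∧
        Tendsto (fun n => ∫ x, g x ∂(mseq n)) atTop (𝓝 (∫ x, g x ∂m)))
      (by
        intro c s hs _ δ _
        refine ⟨s.indicator fun _ => c, by simp, (integrable_const c).indicator hs, ?_⟩
        simp only [integral_indicator_const c hs]
        exact (hset s hs).smul_const c)
      (by
        rintro f g ⟨hf, hf'⟩ ⟨hg, hg'⟩
        refine ⟨hf.add hg, ?_⟩
        simp only [Pi.add_apply]
        rw [integral_add hf hg]
        refine (hf'.add hg').congr fun n => ?_
        rw [integral_add (hf.mono_measure (hle' n)) (hg.mono_measure (hle' n))])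
      (fun g hg => hg.1.aestronglyMeasurable) hε'
    have hgi : ∫ x, ‖f x - g x‖ ∂m ≤ ε / 4 := by
      rw [eLpNorm_one_eq_lintegral_enorm,
        ← ofReal_integral_norm_eq_lintegral_enorm (hf.sub hgint)] at hgi'
      exact (ENNReal.ofReal_le_ofReal_iff (by positivity)).1 hgi'
    rw [Metric.tendsto_atTop] at hg0
    obtain ⟨N, hN⟩ := hg0 (ε / 4) (by positivity)
    refine ⟨N, fun n hn => ?_⟩
    have h1 := hN n hn
    have hb : ∀ μ : Measure Ω, μ ≤ m → |∫ x, f x ∂μ - ∫ x, g x ∂μ| ≤ ε / 4 := by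
      intro μ hμ
      rw [← integral_sub (hf.mono_measure hμ) (hgint.mono_measure hμ)]
      refine (abs_integral_le_integral_abs).trans (le_trans ?_ hgi)
      exact integral_mono_measure hμ (Eventually.of_forall fun x => abs_nonneg _)
        (hf.sub hgint).norm
    have h2 := abs_le.1 (hb _ (hle' n))
    have h3 := abs_le.1 (hb m le_rfl)
    rw [Real.dist_eq, abs_lt] at *
    constructor <;> linarith [h1.1, h1.2, h2.1, h2.2, h3.1, h3.2]
  refine ⟨fun f hf A hA => ?_, fun A hA => ?_⟩
  · simpa only [integral_indicator hA] using key (A.indicator f) (hf.indicator hA)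
  · exact (ENNReal.tendsto_toReal_iff (fun n => measure_ne_top _ A) (measure_ne_top m A)).1
      (hset A hA)
end

section
/- Let Ω be a locally compact Hausdorff topological space with Borel σ-algebra B. Let (m_n) be a sequence of finite nonnegative Borel measures on Ω which is uniformly absolutely continuous with respect to a finite Radon measure m and which converges vaguely to m. Let f : Ω → ℝ be a continuous function which has uniformly absolutely continuous (m_n)-integrals on Ω. Then sup_n ∫_Ω |f| dm_n < ∞. -/
open MeasureTheory Filter Topology

/-- If `(mₙ)` is uniformly absolutely continuous with respect to a finite Radon measure
`m` and vaguely convergent to `m`, and `f` is a continuous function with uniformly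
absolutely continuous `(mₙ)`-integrals, then `supₙ ∫ |f| dmₙ < ∞`. -/
theorem sup_integral_abs_lt_top
    {Ω : Type*} [TopologicalSpace Ω] [LocallyCompactSpace Ω] [T2Space Ω]
    [MeasurableSpace Ω] [BorelSpace Ω]
    (m : Measure Ω) (mseq : ℕ → Measure Ω)
    [IsFiniteMeasure m] (hfin : ∀ n, IsFiniteMeasure (mseq n))
    (hRadon : m.InnerRegular)
    (huac : ∀ ε : ℝ, 0 < ε → ∃ δ : ℝ, 0 < δ ∧ ∀ E : Set Ω, MeasurableSet E →
      m E < ENNReal.ofReal δ → ∀ n, mseq n E < ENNReal.ofReal ε)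
    (hvague : ∀ g : Ω → ℝ, Continuous g → Tendsto g (cocompact Ω) (𝓝 0) →
      Tendsto (fun n => ∫ x, g x ∂(mseq n)) atTop (𝓝 (∫ x, g x ∂m)))
    (f : Ω → ℝ) (hf : Continuous f)
    (hfint : ∀ n, Integrable f (mseq n))
    (hfuac : ∀ ε : ℝ, 0 < ε → ∃ δ : ℝ, 0 < δ ∧ ∀ n, ∀ A : Set Ω, MeasurableSet A →
      mseq n A < ENNReal.ofReal δ → ∫ x in A, |f x| ∂(mseq n) < ε) :
    ∃ C : ℝ, ∀ n, ∫ x, |f x| ∂(mseq n) ≤ C := by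
  obtain ⟨δ₁, hδ₁, h1⟩ := hfuac 1 one_pos
  obtain ⟨δ₂, hδ₂, h2⟩ := huac δ₁ hδ₁
  obtain ⟨K, -, hK, hKm⟩ := (MeasurableSet.univ : MeasurableSet (Set.univ : Set Ω)).exists_isCompact_diff_lt
    (μ := m) (measure_ne_top m _) (ε := ENNReal.ofReal δ₂) (by simpa using hδ₂)
  rw [← Set.compl_eq_univ_diff] at hKm
  have hKmeas : MeasurableSet K := hK.isClosed.measurableSet
  obtain ⟨g, hg1, -, hgc, hg⟩ := exists_continuous_one_zero_of_isCompact hK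
    (isClosed_empty (X := Ω)) (Set.disjoint_empty K)
  have hcont : Continuous (fun x => |f x| * g x) := hf.abs.mul g.continuous
  have hcs : HasCompactSupport (fun x => |f x| * g x) := hgc.mul_left
  have hlim := hvague _ hcont hcs.is_zero_at_infty
  obtain ⟨C, hC⟩ := hlim.bddAbove_range
  refine ⟨C + 1, fun n => ?_⟩
  haveI := hfin n
  have hCn : ∫ x, |f x| * g x ∂(mseq n) ≤ C := hC ⟨n, rfl⟩
  have hint : Integrable (fun x => |f x| * g x) (mseq n) :=
    hcont.integrable_of_hasCompactSupport hcs
  have hA := h1 n Kᶜ hKmeas.compl (h2 _ hKmeas.compl hKm n)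
  have hB : ∫ x in K, |f x| ∂(mseq n) ≤ ∫ x, |f x| * g x ∂(mseq n) := by
    calc ∫ x in K, |f x| ∂(mseq n) = ∫ x in K, |f x| * g x ∂(mseq n) := by
          refine setIntegral_congr_fun hKmeas fun x hx => ?_
          have := hg1 hx
          simp only [Pi.one_apply] at this
          simp [this]
      _ ≤ _ := setIntegral_le_integral hint
          (Eventually.of_forall fun x => mul_nonneg (abs_nonneg _) (hg x).1)
  have := integral_add_compl hKmeas (hfint n).abs
  linarith
end

section
/- Let Ω be a locally compact Hausdorff topological space with Borel σ-algebra B. Let (m_n) be a sequence of finite nonnegative Borel measures on Ω which is uniformly absolutely continuous with respect to a finite Radon measure m and which converges vaguely to m. Let f : Ω → ℝ be a continuous function which has uniformly absolutely continuous (m_n)-integrals on Ω. Then f ∈ L¹(m) and lim_n ∫_Ω f dm_n = ∫_Ω f dm. -/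
open MeasureTheory Filter Topology

/-- If `(mₙ)` is uniformly absolutely continuous with respect to a finite Radon measure
`m` and vaguely convergent to `m`, and `f` is a continuous function with uniformly
absolutely continuous `(mₙ)`-integrals, then `f ∈ L¹(m)` and `∫ f dmₙ → ∫ f dm`. -/
theorem integrable_and_tendsto_integral
    {Ω : Type*} [TopologicalSpace Ω] [LocallyCompactSpace Ω] [T2Space Ω]
    [MeasurableSpace Ω] [BorelSpace Ω]
    (m : Measure Ω) (mseq : ℕ → Measure Ω)
    [IsFiniteMeasure m] (hfin : ∀ n, IsFiniteMeasure (mseq n))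
    (hRadon : m.InnerRegular)
    (huac : ∀ ε : ℝ, 0 < ε → ∃ δ : ℝ, 0 < δ ∧ ∀ E : Set Ω, MeasurableSet E →
      m E < ENNReal.ofReal δ → ∀ n, mseq n E < ENNReal.ofReal ε)
    (hvague : ∀ g : Ω → ℝ, Continuous g → Tendsto g (cocompact Ω) (𝓝 0) →
      Tendsto (fun n => ∫ x, g x ∂(mseq n)) atTop (𝓝 (∫ x, g x ∂m)))
    (f : Ω → ℝ) (hf : Continuous f)
    (hfint : ∀ n, Integrable f (mseq n))
    (hfuac : ∀ ε : ℝ, 0 < ε → ∃ δ : ℝ, 0 < δ ∧ ∀ n, ∀ A : Set Ω, MeasurableSet A →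
      mseq n A < ENNReal.ofReal δ → ∫ x in A, |f x| ∂(mseq n) < ε) :
    Integrable f m ∧
      Tendsto (fun n => ∫ x, f x ∂(mseq n)) atTop (𝓝 (∫ x, f x ∂m)) := by
  have hφex : ∀ K : Set Ω, IsCompact K → ∃ φ : C(Ω, ℝ), Set.EqOn φ 1 K ∧
      HasCompactSupport φ ∧ ∀ x, φ x ∈ Set.Icc (0 : ℝ) 1 := by
    intro K hK
    obtain ⟨φ, h1, -, h3, h4⟩ := exists_continuous_one_zero_of_isCompact hK isClosed_empty
      (Set.disjoint_empty K)
    exact ⟨φ, h1, h3, h4⟩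
  have hKex : ∀ δ : ENNReal, δ ≠ 0 → ∃ K : Set Ω, IsCompact K ∧ m Kᶜ < δ := by
    intro δ hδ
    obtain ⟨K, -, hK, h⟩ := MeasurableSet.univ.exists_isCompact_lt_add (measure_ne_top m _) hδ
    refine ⟨K, hK, ?_⟩
    rw [measure_compl hK.measurableSet (measure_ne_top m _)]
    exact ENNReal.sub_lt_of_lt_add (measure_mono (Set.subset_univ _)) (by rwa [add_comm])
  -- an exhausting sequence of compact sets
  obtain ⟨L, hLc, hLcov⟩ : ∃ L : ℕ → Set Ω, (∀ k, IsCompact (L k)) ∧ AECover m atTop L := by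
    obtain ⟨e, he, hes⟩ := ENNReal.exists_pos_sum_of_countable' (ε := 1) one_ne_zero ℕ
    choose L hL hLe using fun k => hKex (e k) (he k).ne'
    refine ⟨L, hL, ?_, fun k => (hL k).measurableSet⟩
    have : ∑' k, m (L k)ᶜ ≠ ⊤ :=
      ne_top_of_le_ne_top (hes.trans ENNReal.one_lt_top).ne
        (ENNReal.tsum_le_tsum fun k => (hLe k).le)
    filter_upwards [ae_eventually_notMem this] with x hx
    filter_upwards [hx] with k hk
    simpa using hk
  have hint : ∀ (g : Ω → ℝ), Continuous g → ∀ φ : C(Ω, ℝ), HasCompactSupport φ →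
      ∀ μ : Measure Ω, IsFiniteMeasure μ → Integrable (fun x => g x * φ x) μ := by
    intro g hg φ hφ μ _
    exact (hg.mul φ.continuous).integrable_of_hasCompactSupport hφ.mul_left
  have hlim : ∀ (g : Ω → ℝ), Continuous g → ∀ φ : C(Ω, ℝ), HasCompactSupport φ →
      Tendsto (fun n => ∫ x, g x * φ x ∂(mseq n)) atTop (𝓝 (∫ x, g x * φ x ∂m)) := by
    intro g hg φ hφ
    exact hvague _ (hg.mul φ.continuous) (HasCompactSupport.is_zero_at_infty hφ.mul_left)
  -- the key choice of cut-off function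
  have key : ∀ ε : ℝ, 0 < ε → ∃ φ : C(Ω, ℝ), HasCompactSupport φ ∧
      (∀ x, φ x ∈ Set.Icc (0 : ℝ) 1) ∧
      ∀ n, ∫ x, |f x| ∂(mseq n) ≤ ∫ x, |f x| * φ x ∂(mseq n) + ε := by
    intro ε hε
    obtain ⟨δ₁, hδ₁, h₁⟩ := hfuac ε hε
    obtain ⟨δ₂, hδ₂, h₂⟩ := huac δ₁ hδ₁
    obtain ⟨K, hK, hKm⟩ := hKex (ENNReal.ofReal δ₂) (by simpa using hδ₂)
    obtain ⟨φ, hφ1, hφc, hφ⟩ := hφex K hK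
    refine ⟨φ, hφc, hφ, fun n => ?_⟩
    have := hfin n
    have hKm' := hK.measurableSet.compl
    have h3 := h₁ n Kᶜ hKm' (h₂ _ hKm' hKm n)
    rw [← integral_indicator hKm'] at h3
    have hi1 := hint _ hf.abs φ hφc (mseq n) this
    have hi2 := (hfint n).abs.indicator hKm'
    calc ∫ x, |f x| ∂(mseq n)
        ≤ ∫ x, (|f x| * φ x + (Kᶜ).indicator (fun x => |f x|) x) ∂(mseq n) := by
          refine integral_mono (hfint n).abs (hi1.add hi2) fun x => ?_
          by_cases hx : x ∈ K
          · have := hφ1 hx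
            simp at this
            simp [hx, this]
          · have : 0 ≤ |f x| * φ x := mul_nonneg (abs_nonneg _) (hφ x).1
            simp [hx, this]
      _ = _ := integral_add hi1 hi2
      _ ≤ _ := by linarith
  have hLint : ∀ k, IntegrableOn (fun x => |f x|) (L k) m := fun k =>
    hf.abs.continuousOn.integrableOn_compact (hLc k)
  have key2 : ∀ ε : ℝ, ∀ φ : C(Ω, ℝ), HasCompactSupport φ →
      (∀ n, ∫ x, |f x| ∂(mseq n) ≤ ∫ x, |f x| * φ x ∂(mseq n) + ε) →
      ∀ k, ∫ x in L k, |f x| ∂m ≤ ∫ x, |f x| * φ x ∂m + ε := by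
    intro ε φ hφ hle k
    obtain ⟨ψ, hψ1, hψc, hψ⟩ := hφex (L k) (hLc k)
    have h1 : ∫ x in L k, |f x| ∂m ≤ ∫ x, |f x| * ψ x ∂m := by
      rw [← integral_indicator (hLc k).measurableSet]
      refine integral_mono ((integrable_indicator_iff (hLc k).measurableSet).2 (hLint k))
        (hint _ hf.abs ψ hψc m inferInstance) fun x => ?_
      by_cases hx : x ∈ L k
      · have := hψ1 hx
        simp at this
        simp [hx, this]
      · have : 0 ≤ |f x| * ψ x := mul_nonneg (abs_nonneg _) (hψ x).1
        simp [hx, this]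
    refine h1.trans (le_of_tendsto_of_tendsto' (hlim _ hf.abs ψ hψc)
      ((hlim _ hf.abs φ hφ).add_const ε) fun n => le_trans ?_ (hle n))
    refine integral_mono (hint _ hf.abs ψ hψc _ (hfin n)) (hfint n).abs fun x => ?_
    exact mul_le_of_le_one_right (abs_nonneg _) (hψ x).2
  have hfm : Integrable f m := by
    obtain ⟨φ, hφc, -, hle⟩ := key 1 one_pos
    refine hLcov.integrable_of_integral_norm_bounded (∫ x, |f x| * φ x ∂m + 1)
      (fun k => hf.continuousOn.integrableOn_compact (hLc k)) (Eventually.of_forall fun k => ?_)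
    exact key2 1 φ hφc hle k
  refine ⟨hfm, ?_⟩
  -- comparison of `f` and `f φ`
  have comp : ∀ μ : Measure Ω, IsFiniteMeasure μ → Integrable f μ → ∀ (ε : ℝ) (φ : C(Ω, ℝ)),
      HasCompactSupport φ → (∀ x, φ x ∈ Set.Icc (0 : ℝ) 1) →
      ∫ x, |f x| ∂μ ≤ ∫ x, |f x| * φ x ∂μ + ε →
      |∫ x, f x ∂μ - ∫ x, f x * φ x ∂μ| ≤ ε := by
    intro μ hμ hi ε φ hφc hφ hle
    rw [← integral_sub hi (hint f hf φ hφc μ hμ)]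
    calc |∫ x, (f x - f x * φ x) ∂μ| ≤ ∫ x, |f x - f x * φ x| ∂μ := abs_integral_le_integral_abs
      _ = ∫ x, (|f x| - |f x| * φ x) ∂μ := by
        refine integral_congr_ae (Eventually.of_forall fun x => ?_)
        have h : 0 ≤ 1 - φ x := sub_nonneg.2 (hφ x).2
        have e : f x - f x * φ x = f x * (1 - φ x) := by ring
        simp only [e, abs_mul, abs_of_nonneg h]
        ring
      _ = _ := integral_sub hi.abs (hint _ hf.abs φ hφc μ hμ)
      _ ≤ ε := by linarith
  rw [Metric.tendsto_atTop]
  intro ε hε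
  obtain ⟨φ, hφc, hφ, hle⟩ := key (ε / 4) (by positivity)
  have hlem : ∫ x, |f x| ∂m ≤ ∫ x, |f x| * φ x ∂m + ε / 4 :=
    le_of_tendsto' (hLcov.integral_tendsto_of_countably_generated hfm.abs)
      (key2 (ε / 4) φ hφc hle)
  have c1 := comp m inferInstance hfm _ φ hφc hφ hlem
  obtain ⟨N, hN⟩ := Metric.tendsto_atTop.1 (hlim f hf φ hφc) (ε / 4) (by positivity)
  refine ⟨N, fun n hn => ?_⟩
  have c2 := comp (mseq n) (hfin n) (hfint n) _ φ hφc hφ (hle n)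
  have c3 := hN n hn
  rw [Real.dist_eq] at c3 ⊢
  rw [abs_le] at c1 c2
  rw [abs_lt] at c3 ⊢
  constructor <;> linarith [c1.1, c1.2, c2.1, c2.2, c3.1, c3.2]
end

section
/- Let Ω be a locally compact Hausdorff topological space with Borel σ-algebra B. Let m and m_n (n ∈ ℕ) be finite nonnegative Borel measures on Ω, with m Radon. Let f and f_n (n ∈ ℕ) be Borel measurable real-valued functions on Ω. Suppose that: (i) f_n(t) → f(t) for m-almost every t ∈ Ω; (ii) f is continuous; (iii) the sequence (f_n) and the function f have uniformly absolutely continuous (m_n)-integrals on Ω; (iv) (m_n) converges vaguely to m and is uniformly absolutely continuous with respect to m. Then f ∈ L¹(m) and lim_n ∫_A f_n dm_n = ∫_A f dm for every Borel set A. -/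
open MeasureTheory Filter Topology

lemma aux_approx {Ω : Type*} [TopologicalSpace Ω] [LocallyCompactSpace Ω] [T2Space Ω]
    [MeasurableSpace Ω] [BorelSpace Ω] (m : Measure Ω) [IsFiniteMeasure m]
    (hRadon : m.InnerRegular) (A : Set Ω) (hA : MeasurableSet A) (δ : ℝ) (hδ : 0 < δ) :
    ∃ (φ : Ω → ℝ) (E : Set Ω), Continuous φ ∧ HasCompactSupport φ ∧ (∀ x, 0 ≤ φ x) ∧
      (∀ x, φ x ≤ 1) ∧ MeasurableSet E ∧ m E < ENNReal.ofReal δ ∧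
      (∀ x, x ∉ E → x ∈ A → φ x = 1) ∧ (∀ x, x ∉ E → x ∉ A → φ x = 0) := by
  have hδ2 : ENNReal.ofReal (δ/2) ≠ 0 := by simp; linarith
  obtain ⟨U, hAU, hU, -, hU2⟩ := hA.exists_isOpen_sdiff_lt (μ := m) (measure_ne_top m A) hδ2
  obtain ⟨K, hKA, hK, hK2⟩ := hA.exists_isCompact_sdiff_lt (μ := m) (measure_ne_top m A) hδ2
  obtain ⟨φ, h1, h0, hc, h01⟩ := exists_continuous_one_zero_of_isCompact hK hU.isClosed_compl
    (Set.disjoint_compl_right_iff_subset.2 (hKA.trans hAU))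
  refine ⟨φ, (U \ A) ∪ (A \ K), φ.continuous, hc, fun x => (h01 x).1, fun x => (h01 x).2,
    (hU.measurableSet.diff hA).union (hA.diff hK.measurableSet), ?_, ?_, ?_⟩
  · refine (measure_union_le _ _).trans_lt ((ENNReal.add_lt_add hU2 hK2).trans_eq ?_)
    rw [← ENNReal.ofReal_add (by linarith) (by linarith)]; congr 1; ring
  · intro x hx hxA
    apply h1
    by_contra h
    exact hx (Or.inr ⟨hxA, h⟩)
  · intro x hx hxA
    apply h0
    intro h
    exact hx (Or.inl ⟨h, hxA⟩)

lemma aux_diff {Ω : Type*} [MeasurableSpace Ω] (μ : Measure Ω) (u v g : Ω → ℝ)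
    (hu : Integrable u μ) (hv : Integrable v μ) (hg : Integrable g μ) (E : Set Ω)
    (hE : MeasurableSet E) (h : ∀ x, |u x - v x| ≤ E.indicator (fun x => |g x|) x) :
    |∫ x, u x ∂μ - ∫ x, v x ∂μ| ≤ ∫ x in E, |g x| ∂μ := by
  rw [← integral_sub hu hv, ← integral_indicator hE]
  refine (abs_integral_le_integral_abs).trans ?_
  exact integral_mono (hu.sub hv).abs (hg.abs.indicator hE) h

lemma aux_cont {Ω : Type*} [TopologicalSpace Ω] [LocallyCompactSpace Ω] [T2Space Ω]
    [MeasurableSpace Ω] [BorelSpace Ω]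
    (m : Measure Ω) (mseq : ℕ → Measure Ω)
    [IsFiniteMeasure m] (hfin : ∀ n, IsFiniteMeasure (mseq n))
    (hRadon : m.InnerRegular) (f : Ω → ℝ) (hf : Continuous f)
    (hfint : ∀ n, Integrable f (mseq n))
    (hvague : ∀ g : Ω → ℝ, Continuous g → Tendsto g (cocompact Ω) (𝓝 0) →
      Tendsto (fun n => ∫ x, g x ∂(mseq n)) atTop (𝓝 (∫ x, g x ∂m)))
    (huac : ∀ ε : ℝ, 0 < ε → ∃ δ : ℝ, 0 < δ ∧ ∀ E : Set Ω, MeasurableSet E →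
      m E < ENNReal.ofReal δ → ∀ n, ∫ x in E, |f x| ∂(mseq n) < ε) :
    (∃ C : ℝ, ∀ᶠ n in atTop, ∫ x, |f x| ∂(mseq n) ≤ C) ∧ Integrable f m ∧
      ∀ A : Set Ω, MeasurableSet A →
        Tendsto (fun n => ∫ x in A, f x ∂(mseq n)) atTop (𝓝 (∫ x in A, f x ∂m)) := by
  have hC : ∃ C : ℝ, ∀ᶠ n in atTop, ∫ x, |f x| ∂(mseq n) ≤ C := by
    obtain ⟨δ, hδ, h⟩ := huac 1 one_pos
    obtain ⟨φ, E, hφ, hφc, h0, h1, hE, hmE, hA, -⟩ :=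
      aux_approx m hRadon Set.univ MeasurableSet.univ δ hδ
    have hc : Continuous (fun x => φ x * |f x|) := by fun_prop
    have hcs : HasCompactSupport (fun x => φ x * |f x|) := hφc.mul_right
    have ht := hvague _ hc hcs.is_zero_at_infty
    refine ⟨1 + (∫ x, φ x * |f x| ∂m + 1), ?_⟩
    filter_upwards [ht.eventually_lt_const (lt_add_one _)] with n hn
    have := aux_diff (mseq n) (fun x => |f x|) (fun x => φ x * |f x|) f (hfint n).abs
      (hc.integrable_of_hasCompactSupport hcs) (hfint n) E hE (by
        intro x
        by_cases hx : x ∈ E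
        · simp only [Set.indicator_of_mem hx]
          rw [abs_le]
          constructor <;> nlinarith [h0 x, h1 x, abs_nonneg (f x)]
        · simp [hx, hA x hx])
    have h3 := h E hE hmE n
    have := le_abs_self (∫ x, |f x| ∂(mseq n) - ∫ x, φ x * |f x| ∂(mseq n))
    linarith
  have hint : Integrable f m := by
    obtain ⟨C, hC⟩ := hC
    have : ∀ k : ℕ, _ := fun k => aux_approx m hRadon Set.univ MeasurableSet.univ ((1/2)^k)
      (by positivity)
    choose φ E hφ hφc h0 h1 hE hmE hA _ using this
    have hsum : ∑' k, m (E k) ≠ ⊤ := by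
      refine ne_top_of_le_ne_top ?_ (ENNReal.tsum_le_tsum fun k => (hmE k).le)
      rw [← ENNReal.ofReal_tsum_of_nonneg (fun k => by positivity) summable_geometric_two]
      exact ENNReal.ofReal_ne_top
    have hc : ∀ k, Continuous (fun x => φ k x * |f x|) := fun k => by
      have := hφ k
      fun_prop
    have hcs : ∀ k, HasCompactSupport (fun x => φ k x * |f x|) := fun k => (hφc k).mul_right
    have hle : ∀ k, ∫ x, φ k x * |f x| ∂m ≤ C := by
      intro k
      refine le_of_tendsto (hvague _ (hc k) (hcs k).is_zero_at_infty) ?_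
      filter_upwards [hC] with n hn
      refine le_trans (integral_mono ((hc k).integrable_of_hasCompactSupport (hcs k))
        (hfint n).abs ?_) hn
      intro x
      have := mul_le_mul_of_nonneg_right (h1 k x) (abs_nonneg (f x))
      simpa using this
    refine ⟨hf.aestronglyMeasurable, ?_⟩
    have hlim : ∀ᵐ x ∂m, ‖f x‖ₑ ≤ liminf (fun k => ENNReal.ofReal (φ k x * |f x|)) atTop := by
      filter_upwards [ae_eventually_notMem hsum] with x hx
      refine le_liminf_of_le (by isBoundedDefault) ?_
      filter_upwards [hx] with k hk
      rw [hA k x hk trivial, one_mul, Real.enorm_eq_ofReal_abs]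
    refine lt_of_le_of_lt ((lintegral_mono_ae hlim).trans (lintegral_liminf_le fun k =>
      ENNReal.measurable_ofReal.comp (hc k).measurable)) ?_
    refine lt_of_le_of_lt (b := ENNReal.ofReal C) ?_ ENNReal.ofReal_lt_top
    refine liminf_le_of_le (by isBoundedDefault) ?_
    intro b hb
    obtain ⟨k, hk⟩ := hb.exists
    refine hk.trans ?_
    rw [← ofReal_integral_eq_lintegral_ofReal ((hc k).integrable_of_hasCompactSupport (hcs k))
      (ae_of_all _ fun x => mul_nonneg (h0 k x) (abs_nonneg _))]
    exact ENNReal.ofReal_le_ofReal (hle k)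
  refine ⟨hC, hint, fun A hA => ?_⟩
  rw [Metric.tendsto_atTop']
  intro ε hε
  obtain ⟨δ₁, hδ₁, H₁⟩ := huac (ε/3) (by linarith)
  obtain ⟨δ₂, hδ₂, H₂⟩ : ∃ δ : ℝ, 0 < δ ∧ ∀ E : Set Ω, MeasurableSet E →
      m E < ENNReal.ofReal δ → ∫ x in E, |f x| ∂m < ε/3 := by
    obtain ⟨δ, hδ, H⟩ := exists_pos_setLIntegral_lt_of_measure_lt (μ := m) (f := fun x => ‖f x‖ₑ)
      hint.2.ne (ε := ENNReal.ofReal (ε/3)) (by simp; linarith)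
    refine ⟨(min δ 1).toReal, ENNReal.toReal_pos (by simp [hδ.ne']) (by simp), ?_⟩
    intro E hE hm
    rw [ENNReal.ofReal_toReal (by simp)] at hm
    have := H E (hm.trans_le (min_le_left _ _))
    have h2 := integral_norm_eq_lintegral_enorm (μ := m.restrict E) hf.aestronglyMeasurable
    simp only [Real.norm_eq_abs] at h2
    rw [h2]
    exact (ENNReal.lt_ofReal_iff_toReal_lt this.ne_top).1 this
  obtain ⟨φ, E, hφ, hφc, h0, h1, hE, hmE, hA1, hA0⟩ :=
    aux_approx m hRadon A hA (min δ₁ δ₂) (lt_min hδ₁ hδ₂)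
  have hc : Continuous (fun x => φ x * f x) := by fun_prop
  have hcs : HasCompactSupport (fun x => φ x * f x) := hφc.mul_right
  have ht := hvague _ hc hcs.is_zero_at_infty
  have key : ∀ x, |A.indicator f x - φ x * f x| ≤ E.indicator (fun x => |f x|) x := by
    intro x
    by_cases hx : x ∈ E
    · simp only [Set.indicator_of_mem hx]
      by_cases hxA : x ∈ A
      · simp only [Set.indicator_of_mem hxA]
        rw [show f x - φ x * f x = (1 - φ x) * f x by ring, abs_mul,
          abs_of_nonneg (by linarith [h1 x])]
        nlinarith [h0 x, abs_nonneg (f x)]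
      · simp only [Set.indicator_of_notMem hxA]
        rw [zero_sub, abs_neg, abs_mul, abs_of_nonneg (h0 x)]
        nlinarith [h1 x, abs_nonneg (f x)]
    · by_cases hxA : x ∈ A
      · simp [hx, hxA, hA1 x hx hxA]
      · simp [hx, hxA, hA0 x hx hxA]
  have hm := aux_diff m _ _ f (hint.indicator hA)
    (hc.integrable_of_hasCompactSupport hcs) hint E hE key
  have hm2 := H₂ E hE (hmE.trans_le (ENNReal.ofReal_le_ofReal (min_le_right _ _)))
  rw [Metric.tendsto_atTop'] at ht
  obtain ⟨N, hN⟩ := ht (ε/3) (by linarith)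
  refine ⟨N, fun n hn => ?_⟩
  have h4 := hN n hn
  have hn1 := aux_diff (mseq n) _ _ f ((hfint n).indicator hA)
    (hc.integrable_of_hasCompactSupport hcs) (hfint n) E hE key
  have hn2 := H₁ E hE (hmE.trans_le (ENNReal.ofReal_le_ofReal (min_le_left _ _))) n
  rw [integral_indicator hA] at hm hn1
  rw [Real.dist_eq] at h4 ⊢
  rw [abs_lt] at h4 ⊢
  rw [abs_le] at hm hn1
  constructor <;> linarith [h4.1, h4.2, hm.1, hm.2, hn1.1, hn1.2]

/-- Main convergence theorem (Theorem 3.5): if `fₙ → f` `m`-a.e., `f` is continuous,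
`(fₙ)` and `f` have uniformly absolutely continuous `(mₙ)`-integrals, and `(mₙ)` is
vaguely convergent to the finite Radon measure `m` and uniformly absolutely continuous
with respect to `m`, then `f ∈ L¹(m)` and `∫_A fₙ dmₙ → ∫_A f dm` for every Borel set `A`. -/
theorem tendsto_setIntegral_of_vague
    {Ω : Type*} [TopologicalSpace Ω] [LocallyCompactSpace Ω] [T2Space Ω]
    [MeasurableSpace Ω] [BorelSpace Ω]
    (m : Measure Ω) (mseq : ℕ → Measure Ω)
    [IsFiniteMeasure m] (hfin : ∀ n, IsFiniteMeasure (mseq n))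
    (hRadon : m.InnerRegular)
    (f : Ω → ℝ) (fseq : ℕ → Ω → ℝ)
    (hmeas : ∀ n, Measurable (fseq n))
    (hfseqint : ∀ n, Integrable (fseq n) (mseq n))
    (hfint : ∀ n, Integrable f (mseq n))
    -- (i) pointwise a.e. convergence
    (hae : ∀ᵐ t ∂m, Tendsto (fun n => fseq n t) atTop (𝓝 (f t)))
    -- (ii) continuity of the limit
    (hf : Continuous f)
    -- (iii) uniformly absolutely continuous (mₙ)-integrals of (fₙ) and of f
    (huacseq : ∀ ε : ℝ, 0 < ε → ∃ δ : ℝ, 0 < δ ∧ ∀ n, ∀ A : Set Ω, MeasurableSet A →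
      mseq n A < ENNReal.ofReal δ → ∫ x in A, |fseq n x| ∂(mseq n) < ε)
    (huacf : ∀ ε : ℝ, 0 < ε → ∃ δ : ℝ, 0 < δ ∧ ∀ n, ∀ A : Set Ω, MeasurableSet A →
      mseq n A < ENNReal.ofReal δ → ∫ x in A, |f x| ∂(mseq n) < ε)
    -- (iv) vague convergence and uniform absolute continuity of the measures
    (hvague : ∀ g : Ω → ℝ, Continuous g → Tendsto g (cocompact Ω) (𝓝 0) →
      Tendsto (fun n => ∫ x, g x ∂(mseq n)) atTop (𝓝 (∫ x, g x ∂m)))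
    (huac : ∀ ε : ℝ, 0 < ε → ∃ δ : ℝ, 0 < δ ∧ ∀ E : Set Ω, MeasurableSet E →
      m E < ENNReal.ofReal δ → ∀ n, mseq n E < ENNReal.ofReal ε) :
    Integrable f m ∧
      ∀ A : Set Ω, MeasurableSet A →
        Tendsto (fun n => ∫ x in A, fseq n x ∂(mseq n)) atTop (𝓝 (∫ x in A, f x ∂m)) := by
  have hcomb : ∀ F : ℕ → Ω → ℝ, (∀ ε : ℝ, 0 < ε → ∃ δ : ℝ, 0 < δ ∧ ∀ n, ∀ A : Set Ω,
      MeasurableSet A → mseq n A < ENNReal.ofReal δ → ∫ x in A, |F n x| ∂(mseq n) < ε) →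
      ∀ ε : ℝ, 0 < ε → ∃ δ : ℝ, 0 < δ ∧ ∀ E : Set Ω, MeasurableSet E →
      m E < ENNReal.ofReal δ → ∀ n, ∫ x in E, |F n x| ∂(mseq n) < ε := by
    intro F hF ε hε
    obtain ⟨δ, hδ, H⟩ := hF ε hε
    obtain ⟨δ', hδ', H'⟩ := huac δ hδ
    exact ⟨δ', hδ', fun E hE hm n => H n E hE (H' E hE hm n)⟩
  have hF := hcomb fseq huacseq
  have hf' := hcomb (fun _ => f) huacf
  obtain ⟨-, hint, hlim⟩ := aux_cont m mseq hfin hRadon f hf hfint hvague hf'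
  obtain ⟨⟨C, hC⟩, -, -⟩ := aux_cont m mseq hfin hRadon (fun _ => 1) continuous_const
    (fun n => integrable_const _) hvague (by
      intro ε hε
      obtain ⟨δ, hδ, H⟩ := huac ε hε
      refine ⟨δ, hδ, fun E hE hm n => ?_⟩
      have := H E hE hm n
      simp only [abs_one, integral_const, smul_eq_mul, mul_one, measureReal_restrict_apply_univ]
      exact (ENNReal.lt_ofReal_iff_toReal_lt this.ne_top).1 this)
  refine ⟨hint, fun A hA => ?_⟩
  suffices h : Tendsto (fun n => ∫ x in A, fseq n x ∂(mseq n) - ∫ x in A, f x ∂(mseq n)) atTop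
      (𝓝 0) by
    simpa using h.add (hlim A hA)
  rw [Metric.tendsto_nhds]
  intro ε hε
  obtain ⟨δ₁, hδ₁, H₁⟩ := hF (ε/4) (by linarith)
  obtain ⟨δ₂, hδ₂, H₂⟩ := hf' (ε/4) (by linarith)
  have hδ : 0 < min δ₁ δ₂ := lt_min hδ₁ hδ₂
  obtain ⟨E, hE, hmE, hunif⟩ := tendstoUniformlyOn_of_ae_tendsto' (μ := m)
    (fun n => (hmeas n).stronglyMeasurable) hf.stronglyMeasurable hae (half_pos hδ)
  have hmE' : m E < ENNReal.ofReal (min δ₁ δ₂) := hmE.trans_lt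
    ((ENNReal.ofReal_lt_ofReal_iff hδ).2 (half_lt_self hδ))
  have hE1 := H₁ E hE (hmE'.trans_le (ENNReal.ofReal_le_ofReal (min_le_left _ _)))
  have hE2 := H₂ E hE (hmE'.trans_le (ENNReal.ofReal_le_ofReal (min_le_right _ _)))
  rw [Metric.tendstoUniformlyOn_iff] at hunif
  have hη : 0 < ε / (4 * (|C| + 1)) := by positivity
  filter_upwards [hC, hunif _ hη] with n hCn hun
  have := hfin n
  set η := ε / (4 * (|C| + 1)) with hηdef
  have hηC : η * C ≤ ε / 4 := by
    have : η * (|C| + 1) = ε / 4 := by rw [hηdef]; field_simp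
    nlinarith [le_abs_self C]
  simp only [abs_one, integral_const, smul_eq_mul, mul_one] at hCn
  rw [Real.dist_eq, sub_zero, ← integral_sub (hfseqint n).integrableOn (hfint n).integrableOn]
  have hi1 : Integrable (E.indicator (fun x => |fseq n x|)) (mseq n) :=
    (hfseqint n).abs.indicator hE
  have hi2 : Integrable (E.indicator (fun x => |f x|)) (mseq n) := (hfint n).abs.indicator hE
  have hi3 : Integrable (fun _ : Ω => η) (mseq n) := integrable_const _
  calc |∫ x in A, (fseq n x - f x) ∂(mseq n)|
      ≤ ∫ x in A, |fseq n x - f x| ∂(mseq n) := abs_integral_le_integral_abs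
    _ ≤ ∫ x, |fseq n x - f x| ∂(mseq n) :=
        setIntegral_le_integral ((hfseqint n).sub (hfint n)).abs (ae_of_all _ fun x => abs_nonneg _)
    _ ≤ ∫ x, ((E.indicator (fun x => |fseq n x|) x + E.indicator (fun x => |f x|) x) + η)
          ∂(mseq n) := by
        refine integral_mono ((hfseqint n).sub (hfint n)).abs ((hi1.add hi2).add hi3) ?_
        intro x
        by_cases hx : x ∈ E
        · simp only [Set.indicator_of_mem hx]
          linarith [abs_sub (fseq n x) (f x)]
        · simp only [Set.indicator_of_notMem hx]
          have := hun x hx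
          rw [dist_comm, Real.dist_eq] at this
          linarith
    _ = (∫ x in E, |fseq n x| ∂(mseq n) + ∫ x in E, |f x| ∂(mseq n)) + η * (mseq n).real Set.univ := by
        have hi12 : Integrable (fun x => E.indicator (fun x => |fseq n x|) x +
            E.indicator (fun x => |f x|) x) (mseq n) := hi1.add hi2
        rw [integral_add hi12 hi3, integral_add hi1 hi2, integral_indicator hE,
          integral_indicator hE]
        simp [mul_comm]
    _ < ε := by
        have := mul_le_mul_of_nonneg_left hCn hη.le
        linarith [hE1 n, hE2 n]
end

section
/- Let Ω be a locally compact Hausdorff topological space with Borel σ-algebra B. Let m and m_n (n ∈ ℕ) be finite nonnegative Borel measures on Ω, with m Radon. If (m_n) converges vaguely to m and is uniformly absolutely continuous with respect to m, then (m_n) converges setwisely to m, i.e., lim_n m_n(A) = m(A) for every Borel set A. -/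
open MeasureTheory Filter Topology

lemma aux_bound {Ω : Type*} [TopologicalSpace Ω] [MeasurableSpace Ω] [BorelSpace Ω]
    (μ : Measure Ω) [IsFiniteMeasure μ] (g : Ω → ℝ) (hg : Continuous g)
    (A K U : Set Ω) (hA : MeasurableSet A) (hK : MeasurableSet K) (hU : MeasurableSet U)
    (hKA : K ⊆ A) (h1 : ∀ x ∈ K, g x = 1) (h0 : ∀ x, x ∉ U → g x = 0)
    (hb : ∀ x, 0 ≤ g x ∧ g x ≤ 1) :
    |μ.real A - ∫ x, g x ∂μ| ≤ μ.real ((A \ K) ∪ (U \ K)) := by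
  have hE : MeasurableSet ((A \ K) ∪ (U \ K)) := (hA.diff hK).union (hU.diff hK)
  have hgi : Integrable g μ := by
    refine Integrable.of_bound hg.measurable.aestronglyMeasurable 1 (ae_of_all _ fun x => ?_)
    rw [Real.norm_eq_abs, abs_le]
    constructor <;> linarith [(hb x).1, (hb x).2]
  have hAi : Integrable (A.indicator (fun _ => (1 : ℝ))) μ :=
    (integrable_const _).indicator hA
  have hEi : Integrable (((A \ K) ∪ (U \ K)).indicator (fun _ => (1 : ℝ))) μ :=
    (integrable_const _).indicator hE
  have e1 : μ.real A = ∫ x, A.indicator (fun _ => (1 : ℝ)) x ∂μ := by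
    rw [integral_indicator_const _ hA]; simp
  have e2 : μ.real ((A \ K) ∪ (U \ K))
      = ∫ x, ((A \ K) ∪ (U \ K)).indicator (fun _ => (1 : ℝ)) x ∂μ := by
    rw [integral_indicator_const _ hE]; simp
  rw [e1, e2, ← integral_sub hAi hgi, ← Real.norm_eq_abs]
  refine norm_integral_le_of_norm_le hEi (ae_of_all _ fun x => ?_)
  have := hb x
  rw [Real.norm_eq_abs, abs_le]
  by_cases hxK : x ∈ K
  · have := hKA hxK
    simp [h1 x hxK, hxK, this]
  · by_cases hxA : x ∈ A <;> by_cases hxU : x ∈ U <;>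
      simp [hxK, hxA, hxU, Set.indicator] <;> first
        | (constructor <;> linarith) | linarith | (have := h0 x hxU; simp [this])

/-- If `(mₙ)` is vaguely convergent to the finite Radon measure `m` and uniformly
absolutely continuous with respect to `m`, then `(mₙ)` converges setwisely to `m`. -/
theorem setwise_of_vague_of_unifAC
    {Ω : Type*} [TopologicalSpace Ω] [LocallyCompactSpace Ω] [T2Space Ω]
    [MeasurableSpace Ω] [BorelSpace Ω]
    (m : Measure Ω) (mseq : ℕ → Measure Ω)
    [IsFiniteMeasure m] (hfin : ∀ n, IsFiniteMeasure (mseq n))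
    (hRadon : m.InnerRegular)
    (hvague : ∀ g : Ω → ℝ, Continuous g → Tendsto g (cocompact Ω) (𝓝 0) →
      Tendsto (fun n => ∫ x, g x ∂(mseq n)) atTop (𝓝 (∫ x, g x ∂m)))
    (huac : ∀ ε : ℝ, 0 < ε → ∃ δ : ℝ, 0 < δ ∧ ∀ E : Set Ω, MeasurableSet E →
      m E < ENNReal.ofReal δ → ∀ n, mseq n E < ENNReal.ofReal ε) :
    ∀ A : Set Ω, MeasurableSet A → Tendsto (fun n => mseq n A) atTop (𝓝 (m A)) := by
  intro A hA
  rw [← ENNReal.tendsto_toReal_iff (fun n => measure_ne_top _ _) (measure_ne_top _ _)]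
  change Tendsto (fun n => (mseq n).real A) atTop (𝓝 (m.real A))
  rw [Metric.tendsto_atTop]
  intro ε hε
  have hε3 : 0 < ε / 3 := by positivity
  obtain ⟨δ, hδ, hE⟩ := huac (ε / 3) hε3
  have hη : 0 < min δ (ε / 3) / 2 := by positivity
  have hη' : ENNReal.ofReal (min δ (ε / 3) / 2) ≠ 0 := by simpa using hη
  obtain ⟨K, hKA, hK, hmK⟩ := hA.exists_isCompact_diff_lt (measure_ne_top m A) hη'
  obtain ⟨U, hKU, hU, -, hmU⟩ :=
    hK.measurableSet.exists_isOpen_diff_lt (measure_ne_top m K) hη'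
  obtain ⟨g, hg1, hg0, hgc, hgb⟩ := exists_continuous_one_zero_of_isCompact hK
    hU.isClosed_compl (Set.disjoint_compl_right_iff_subset.mpr hKU)
  have hmE : m ((A \ K) ∪ (U \ K)) < ENNReal.ofReal (min δ (ε / 3)) := by
    refine (measure_union_le _ _).trans_lt ((ENNReal.add_lt_add hmK hmU).trans_eq ?_)
    rw [← ENNReal.ofReal_add hη.le hη.le, add_halves]
  have hEm : MeasurableSet ((A \ K) ∪ (U \ K)) :=
    (hA.diff hK.measurableSet).union (hU.measurableSet.diff hK.measurableSet)
  have hn := hE _ hEm (hmE.trans_le (ENNReal.ofReal_le_ofReal (min_le_left _ _)))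
  have hm := hmE.trans_le (ENNReal.ofReal_le_ofReal (min_le_right _ _))
  have key : ∀ μ : Measure Ω, IsFiniteMeasure μ →
      μ ((A \ K) ∪ (U \ K)) < ENNReal.ofReal (ε / 3) → |μ.real A - ∫ x, g x ∂μ| < ε / 3 := by
    intro μ _ h
    refine (aux_bound μ g g.continuous A K U hA hK.measurableSet hU.measurableSet hKA
      (fun x hx => hg1 hx) (fun x hx => hg0 hx) (fun x => hgb x)).trans_lt ?_
    exact (ENNReal.lt_ofReal_iff_toReal_lt (measure_ne_top _ _)).mp h
  obtain ⟨N, hN⟩ := Metric.tendsto_atTop.mp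
    (hvague g g.continuous hgc.is_zero_at_infty) (ε / 3) hε3
  refine ⟨N, fun n hnN => ?_⟩
  have a := key _ (hfin n) (hn n)
  have b := key m inferInstance hm
  have c := hN n hnN
  rw [Real.dist_eq] at *
  rw [abs_lt] at *
  constructor <;> linarith [a.1, a.2, b.1, b.2, c.1, c.2]
end

section
/- Let Ω be a locally compact Hausdorff topological space with Borel σ-algebra B. Let m and m_n (n ∈ ℕ) be finite nonnegative Borel measures on Ω, with m Radon. Let f and f_n (n ∈ ℕ) be Borel measurable real-valued functions on Ω such that: (i) f_n → f m-almost everywhere; (ii) f is continuous; (iii) (f_n) and f have uniformly absolutely continuous (m_n)-integrals on Ω; (iv) (m_n) converges vaguely to m and is uniformly absolutely continuous with respect to m. Then the positive and negative parts satisfy lim_n ∫_A f_n⁺ dm_n = ∫_A f⁺ dm and lim_n ∫_A f_n⁻ dm_n = ∫_A f⁻ dm for every Borel set A. -/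
open MeasureTheory Filter Topology

/-- Bounded measurable functions integrate continuously under setwise convergence. -/
lemma aux_bounded {Ω : Type*} [MeasurableSpace Ω] (m : Measure Ω) (mseq : ℕ → Measure Ω)
    [IsFiniteMeasure m] (hfin : ∀ n, IsFiniteMeasure (mseq n))
    (hset : ∀ E, MeasurableSet E → Tendsto (fun n => (mseq n).real E) atTop (𝓝 (m.real E)))
    (C : ℝ) (hC : ∀ n, (mseq n).real Set.univ ≤ C)
    (g : Ω → ℝ) (hg : Measurable g) (h0 : ∀ x, 0 ≤ g x) (M : ℝ) (hM : ∀ x, g x ≤ M) :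
    Tendsto (fun n => ∫ x, g x ∂(mseq n)) atTop (𝓝 (∫ x, g x ∂m)) := by
  have key : ∀ μ : Measure Ω, IsFiniteMeasure μ →
      ∫ x, g x ∂μ = ∫ t in Set.Ioc 0 M, μ.real {a | t ≤ g a} := by
    intro μ hμ
    refine Integrable.integral_eq_integral_Ioc_meas_le ?_ (ae_of_all _ h0) (ae_of_all _ hM)
    refine Integrable.of_bound hg.aestronglyMeasurable M (ae_of_all _ fun x => ?_)
    rw [Real.norm_eq_abs, abs_of_nonneg (h0 x)]; exact hM x
  simp_rw [key m inferInstance, fun n => key (mseq n) (hfin n)]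
  refine tendsto_integral_of_dominated_convergence (fun _ => C) ?_ ?_ ?_ ?_
  · intro n
    have := hfin n
    have : Antitone (fun t : ℝ => (mseq n).real {a | t ≤ g a}) := fun s t hst =>
      measureReal_mono (fun a (ha : t ≤ g a) => le_trans hst ha)
    exact this.measurable.aestronglyMeasurable
  · exact integrable_const _
  · intro n
    have := hfin n
    refine ae_of_all _ fun t => ?_
    rw [Real.norm_eq_abs, abs_of_nonneg measureReal_nonneg]
    exact (measureReal_mono (Set.subset_univ _)).trans (hC n)
  · exact ae_of_all _ fun t => hset _ (measurableSet_le measurable_const hg)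

/-- Vague convergence and uniform absolute continuity give setwise convergence. -/
lemma aux_setwise {Ω : Type*} [TopologicalSpace Ω] [LocallyCompactSpace Ω] [T2Space Ω]
    [MeasurableSpace Ω] [BorelSpace Ω]
    (m : Measure Ω) (mseq : ℕ → Measure Ω)
    [IsFiniteMeasure m] (hfin : ∀ n, IsFiniteMeasure (mseq n))
    (hRadon : m.InnerRegular)
    (hvague : ∀ g : Ω → ℝ, Continuous g → Tendsto g (cocompact Ω) (𝓝 0) →
      Tendsto (fun n => ∫ x, g x ∂(mseq n)) atTop (𝓝 (∫ x, g x ∂m)))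
    (huac : ∀ ε : ℝ, 0 < ε → ∃ δ : ℝ, 0 < δ ∧ ∀ E : Set Ω, MeasurableSet E →
      m E < ENNReal.ofReal δ → ∀ n, mseq n E < ENNReal.ofReal ε)
    (E : Set Ω) (hE : MeasurableSet E) :
    Tendsto (fun n => (mseq n).real E) atTop (𝓝 (m.real E)) := by
  rw [Metric.tendsto_atTop]
  intro ε hε
  obtain ⟨δ, hδ, H⟩ := huac (ε / 3) (by positivity)
  set η := min δ (ε / 3) with hη
  have hηpos : 0 < η := lt_min hδ (by positivity)
  have hη2 : ENNReal.ofReal (η / 2) ≠ 0 := by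
    rw [Ne, ENNReal.ofReal_eq_zero]; linarith
  obtain ⟨K, hKE, hK, hKm⟩ := hE.exists_isCompact_sdiff_lt (measure_ne_top m E) hη2
  obtain ⟨U, hEU, hU, -, hUm⟩ := hE.exists_isOpen_sdiff_lt (measure_ne_top m E) hη2
  have hUK : MeasurableSet (U \ K) := hU.measurableSet.diff hK.measurableSet
  have hsmall : m (U \ K) < ENNReal.ofReal η := by
    have : U \ K ⊆ (E \ K) ∪ (U \ E) := by
      intro x hx
      by_cases hxE : x ∈ E
      · exact Or.inl ⟨hxE, hx.2⟩
      · exact Or.inr ⟨hx.1, hxE⟩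
    calc m (U \ K) ≤ m (E \ K) + m (U \ E) := (measure_mono this).trans (measure_union_le _ _)
      _ < ENNReal.ofReal (η / 2) + ENNReal.ofReal (η / 2) := ENNReal.add_lt_add hKm hUm
      _ = ENNReal.ofReal η := by
        rw [← ENNReal.ofReal_add (by positivity) (by positivity)]; congr 1; ring
  have hm1 : m (U \ K) < ENNReal.ofReal (ε / 3) :=
    hsmall.trans_le (ENNReal.ofReal_le_ofReal (min_le_right _ _))
  have hm2 := H _ hUK (hsmall.trans_le (ENNReal.ofReal_le_ofReal (min_le_left _ _)))
  obtain ⟨g, hg1, hg0, hgc, hgI⟩ := exists_continuous_one_zero_of_isCompact hK hU.isClosed_compl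
    (Set.disjoint_compl_right_iff_subset.2 (hKE.trans hEU))
  have key : ∀ μ : Measure Ω, IsFiniteMeasure μ → μ (U \ K) < ENNReal.ofReal (ε / 3) →
      |∫ x, g x ∂μ - μ.real E| < ε / 3 := by
    intro μ hμ hμs
    have hint : Integrable g μ := by
      refine Integrable.of_bound g.continuous.measurable.aestronglyMeasurable 1
        (ae_of_all _ fun x => ?_)
      rw [Real.norm_eq_abs, abs_of_nonneg (hgI x).1]; exact (hgI x).2
    have h1 : μ.real K ≤ ∫ x, g x ∂μ := by
      rw [← integral_indicator_one hK.measurableSet]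
      refine integral_mono ((integrable_const (1 : ℝ)).indicator hK.measurableSet) hint fun x => ?_
      by_cases hx : x ∈ K
      · simp [hx, hg1 hx]
      · simpa [hx] using (hgI x).1
    have h2 : ∫ x, g x ∂μ ≤ μ.real U := by
      rw [← integral_indicator_one hU.measurableSet]
      refine integral_mono hint ((integrable_const (1 : ℝ)).indicator hU.measurableSet) fun x => ?_
      by_cases hx : x ∈ U
      · simpa [hx] using (hgI x).2
      · simp [hx, hg0 (show x ∈ Uᶜ from hx)]
    have h3 : μ.real K ≤ μ.real E := measureReal_mono hKE
    have h4 : μ.real E ≤ μ.real U := measureReal_mono hEU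
    have h5 : μ.real (U \ K) = μ.real U - μ.real K :=
      measureReal_sdiff (hKE.trans hEU) hK.measurableSet
    have h6 : μ.real (U \ K) < ε / 3 := (ENNReal.lt_ofReal_iff_toReal_lt (measure_ne_top _ _)).1 hμs
    rw [abs_lt]; constructor <;> linarith
  have hgt := hvague g g.continuous hgc.is_zero_at_infty
  obtain ⟨N, hN⟩ := Metric.tendsto_atTop.1 hgt (ε / 3) (by positivity)
  refine ⟨N, fun n hn => ?_⟩
  have a1 := hN n hn
  have a2 := key m inferInstance hm1
  have a3 := key (mseq n) (hfin n) (hm2 n)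
  rw [Real.dist_eq] at *
  rw [abs_lt] at *
  constructor <;> linarith [a1.1, a1.2, a2.1, a2.2, a3.1, a3.2]

/-- Core convergence lemma for a nonnegative limit. -/
lemma aux_core {Ω : Type*} [MeasurableSpace Ω] (m : Measure Ω) (mseq : ℕ → Measure Ω)
    [IsFiniteMeasure m] (hfin : ∀ n, IsFiniteMeasure (mseq n))
    (hset : ∀ E, MeasurableSet E → Tendsto (fun n => (mseq n).real E) atTop (𝓝 (m.real E)))
    (f : Ω → ℝ) (fseq : ℕ → Ω → ℝ)
    (hmeas : ∀ n, Measurable (fseq n)) (hf : Measurable f) (hf0 : ∀ x, 0 ≤ f x)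
    (hfseqint : ∀ n, Integrable (fseq n) (mseq n))
    (hfint : ∀ n, Integrable f (mseq n))
    (hae : ∀ᵐ t ∂m, Tendsto (fun n => fseq n t) atTop (𝓝 (f t)))
    (huacseq : ∀ ε : ℝ, 0 < ε → ∃ δ : ℝ, 0 < δ ∧ ∀ E : Set Ω, MeasurableSet E →
      m E < ENNReal.ofReal δ → ∀ n, ∫ x in E, |fseq n x| ∂(mseq n) < ε)
    (huacf : ∀ ε : ℝ, 0 < ε → ∃ δ : ℝ, 0 < δ ∧ ∀ E : Set Ω, MeasurableSet E →
      m E < ENNReal.ofReal δ → ∀ n, ∫ x in E, |f x| ∂(mseq n) < ε) :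
    Tendsto (fun n => ∫ x, fseq n x ∂(mseq n)) atTop (𝓝 (∫ x, f x ∂m)) := by
  obtain ⟨C, hCpos, hC⟩ : ∃ C : ℝ, 0 < C ∧ ∀ n, (mseq n).real Set.univ ≤ C := by
    obtain ⟨C, hC⟩ := (hset _ MeasurableSet.univ).bddAbove_range
    exact ⟨max C 1, by positivity, fun n => (hC ⟨n, rfl⟩).trans (le_max_left _ _)⟩
  -- truncations
  have hmin_meas : ∀ k : ℕ, Measurable (fun x => min (f x) k) := fun k => hf.min measurable_const
  have hmin_nn : ∀ (k : ℕ) x, 0 ≤ min (f x) k := fun k x => le_min (hf0 x) k.cast_nonneg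
  have htr : ∀ k : ℕ, Tendsto (fun n => ∫ x, min (f x) k ∂(mseq n)) atTop
      (𝓝 (∫ x, min (f x) k ∂m)) := fun k =>
    aux_bounded m mseq hfin hset C hC _ (hmin_meas k) (hmin_nn k) k (fun x => min_le_right _ _)
  have hmin_int : ∀ (k : ℕ) (μ : Measure Ω), IsFiniteMeasure μ →
      Integrable (fun x => min (f x) k) μ := by
    intro k μ hμ
    refine Integrable.of_bound (hmin_meas k).aestronglyMeasurable k (ae_of_all _ fun x => ?_)
    rw [Real.norm_eq_abs, abs_of_nonneg (hmin_nn k x)]; exact min_le_right _ _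
  -- tails
  have htail : ∀ ε : ℝ, 0 < ε → ∀ᶠ k : ℕ in atTop, ∀ n,
      ∫ x, f x ∂(mseq n) ≤ ∫ x, min (f x) k ∂(mseq n) + ε := by
    intro ε hε
    obtain ⟨δ, hδ, H⟩ := huacf ε hε
    have hsm : ∀ k : ℕ, MeasurableSet {x | (k : ℝ) < f x} := fun k =>
      measurableSet_lt measurable_const hf
    have ht : Tendsto (fun k : ℕ => m {x | (k : ℝ) < f x}) atTop (𝓝 0) := by
      have := tendsto_measure_iInter_atTop (μ := m) (s := fun k : ℕ => {x | (k : ℝ) < f x})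
        (fun k => (hsm k).nullMeasurableSet)
        (fun i j hij x (hx : (j : ℝ) < f x) => lt_of_le_of_lt (Nat.cast_le.2 hij) hx)
        ⟨0, measure_ne_top _ _⟩
      have he : (⋂ k : ℕ, {x | (k : ℝ) < f x}) = ∅ := by
        ext x
        simp only [Set.mem_iInter, Set.mem_ofPred_eq, Set.mem_empty_iff_false, iff_false, not_forall,
          not_lt]
        exact exists_nat_ge (f x)
      rw [he, measure_empty] at this
      exact this
    filter_upwards [ht.eventually (gt_mem_nhds (ENNReal.ofReal_pos.2 hδ))] with k hk n
    have := hfin n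
    have h1 := H _ (hsm k) hk n
    rw [← integral_indicator (hsm k)] at h1
    have h2 : ∫ x, f x ∂(mseq n) ≤ ∫ x, (min (f x) k +
        Set.indicator {x | (k : ℝ) < f x} (fun x => |f x|) x) ∂(mseq n) := by
      refine integral_mono (hfint n) ((hmin_int k _ (hfin n)).add
        ((hfint n).abs.indicator (hsm k))) fun x => ?_
      by_cases hx : (k : ℝ) < f x
      · simp only [Set.indicator, Set.mem_ofPred_eq, hx, if_true]
        linarith [hmin_nn k x, le_abs_self (f x)]
      · simp [Set.indicator, hx, min_eq_left (not_lt.1 hx)]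
    rw [integral_add (hmin_int k _ (hfin n)) ((hfint n).abs.indicator (hsm k))] at h2
    linarith
  -- integrability of f under m
  obtain ⟨D, hD⟩ : ∃ D : ℝ, ∀ n, ∫ x, f x ∂(mseq n) ≤ D := by
    obtain ⟨k, hk⟩ := (htail 1 one_pos).exists
    obtain ⟨D, hD⟩ := (htr k).bddAbove_range
    exact ⟨D + 1, fun n => (hk n).trans (by linarith [hD ⟨n, rfl⟩])⟩
  have hmin_le : ∀ k : ℕ, ∫ x, min (f x) k ∂m ≤ D := fun k =>
    le_of_tendsto (htr k) (Eventually.of_forall fun n =>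
      (integral_mono (hmin_int k _ (hfin n)) (hfint n) fun x => min_le_left _ _).trans (hD n))
  have hmin_lim : ∀ x, Tendsto (fun k : ℕ => min (f x) k) atTop (𝓝 (f x)) := by
    intro x
    refine tendsto_const_nhds.congr' ?_
    obtain ⟨k, hk⟩ := exists_nat_ge (f x)
    filter_upwards [eventually_ge_atTop k] with j hj
    exact (min_eq_left (hk.trans (Nat.cast_le.2 hj))).symm
  have hfm : Integrable f m := by
    refine ⟨hf.aestronglyMeasurable, ?_⟩
    rw [hasFiniteIntegral_iff_ofReal (ae_of_all _ hf0)]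
    have h1 : ∀ x, ENNReal.ofReal (f x) =
        liminf (fun k : ℕ => ENNReal.ofReal (min (f x) k)) atTop := fun x =>
      ((ENNReal.tendsto_ofReal (hmin_lim x)).liminf_eq).symm
    simp_rw [h1]
    refine (lintegral_liminf_le fun k => (hmin_meas k).ennreal_ofReal).trans_lt ?_
    refine lt_of_le_of_lt ?_ (ENNReal.ofReal_lt_top (r := D))
    refine liminf_le_of_le (by isBoundedDefault) fun b hb => ?_
    obtain ⟨k, hk⟩ := hb.exists
    refine hk.trans ?_
    rw [← ofReal_integral_eq_lintegral_ofReal (hmin_int k m inferInstance)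
      (ae_of_all _ (hmin_nn k))]
    exact ENNReal.ofReal_le_ofReal (hmin_le k)
  have hlimm : Tendsto (fun k : ℕ => ∫ x, min (f x) k ∂m) atTop (𝓝 (∫ x, f x ∂m)) := by
    refine tendsto_integral_of_dominated_convergence f
      (fun k => (hmin_meas k).aestronglyMeasurable) hfm (fun k => ae_of_all _ fun x => ?_)
      (ae_of_all _ hmin_lim)
    rw [Real.norm_eq_abs, abs_of_nonneg (hmin_nn k x)]; exact min_le_left _ _
  rw [Metric.tendsto_atTop]
  intro ε hε
  have hε6 : 0 < ε / 6 := by positivity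
  obtain ⟨k, hk1, hk2⟩ := ((htail _ hε6).and
    (hlimm.eventually (Metric.ball_mem_nhds _ hε6))).exists
  obtain ⟨δ₁, hδ₁, H₁⟩ := huacseq _ hε6
  obtain ⟨δ₂, hδ₂, H₂⟩ := huacf _ hε6
  have hδ : 0 < min δ₁ δ₂ := lt_min hδ₁ hδ₂
  obtain ⟨t, htm, htle, htu⟩ := tendstoUniformlyOn_of_ae_tendsto'
    (fun n => (hmeas n).stronglyMeasurable) hf.stronglyMeasurable hae (half_pos hδ)
  have htlt : m t < ENNReal.ofReal (min δ₁ δ₂) :=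
    htle.trans_lt ((ENNReal.ofReal_lt_ofReal_iff hδ).2 (half_lt_self hδ))
  have hA1 := H₁ t htm (htlt.trans_le (ENNReal.ofReal_le_ofReal (min_le_left _ _)))
  have hA2 := H₂ t htm (htlt.trans_le (ENNReal.ofReal_le_ofReal (min_le_right _ _)))
  have hu := Metric.tendstoUniformlyOn_iff.1 htu (ε / 6 / C) (by positivity)
  have hv := (htr k).eventually (Metric.ball_mem_nhds _ hε6)
  obtain ⟨N, hN⟩ := eventually_atTop.1 (hu.and hv)
  refine ⟨N, fun n hn => ?_⟩
  obtain ⟨hn1, hn2⟩ := hN n hn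
  have := hfin n
  have b1 : |∫ x, fseq n x ∂(mseq n) - ∫ x, f x ∂(mseq n)| ≤ ε / 6 + ε / 6 + ε / 6 := by
    rw [← integral_sub (hfseqint n) (hfint n)]
    refine (abs_integral_le_integral_abs).trans ?_
    have hi1 : Integrable (t.indicator fun x => |fseq n x|) (mseq n) :=
      (hfseqint n).abs.indicator htm
    have hi2 : Integrable (t.indicator fun x => |f x|) (mseq n) := (hfint n).abs.indicator htm
    have hle : ∫ x, |fseq n x - f x| ∂(mseq n) ≤ ∫ x, (ε / 6 / C +
        (t.indicator (fun x => |fseq n x|) x + t.indicator (fun x => |f x|) x)) ∂(mseq n) := by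
      refine integral_mono ((hfseqint n).sub (hfint n)).abs
        ((integrable_const _).add (hi1.add hi2)) fun x => ?_
      have hp : 0 < ε / 6 / C := by positivity
      by_cases hx : x ∈ t
      · simp only [Set.indicator_of_mem hx]
        linarith [abs_sub (fseq n x) (f x)]
      · simp only [Set.indicator_of_notMem hx]
        have := hn1 x hx
        rw [dist_comm, Real.dist_eq] at this
        linarith
    have hi3 : Integrable (fun x => t.indicator (fun x => |fseq n x|) x +
        t.indicator (fun x => |f x|) x) (mseq n) := hi1.add hi2
    rw [integral_add (integrable_const _) hi3, integral_add hi1 hi2,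
      integral_indicator htm, integral_indicator htm, integral_const, smul_eq_mul] at hle
    have hc : (mseq n).real Set.univ * (ε / 6 / C) ≤ ε / 6 := by
      calc _ ≤ C * (ε / 6 / C) := by gcongr; exact hC n
        _ = ε / 6 := by field_simp
    linarith [hA1 n, hA2 n]
  have b2 := hk1 n
  have b3 : ∫ x, min (f x) k ∂(mseq n) ≤ ∫ x, f x ∂(mseq n) :=
    integral_mono (hmin_int k _ (hfin n)) (hfint n) fun x => min_le_left _ _
  rw [Real.dist_eq, abs_lt] at hk2 hn2
  rw [abs_le] at b1
  rw [Real.dist_eq, abs_lt]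
  constructor <;> linarith [hk2.1, hk2.2, hn2.1, hn2.2, b1.1, b1.2]

/-- Set integral of a 1-Lipschitz nonnegative function of `fₙ`. -/
lemma aux_phi {Ω : Type*} [MeasurableSpace Ω] (m : Measure Ω) (mseq : ℕ → Measure Ω)
    [IsFiniteMeasure m] (hfin : ∀ n, IsFiniteMeasure (mseq n))
    (hset : ∀ E, MeasurableSet E → Tendsto (fun n => (mseq n).real E) atTop (𝓝 (m.real E)))
    (f : Ω → ℝ) (fseq : ℕ → Ω → ℝ)
    (hmeas : ∀ n, Measurable (fseq n)) (hf : Measurable f)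
    (hfseqint : ∀ n, Integrable (fseq n) (mseq n))
    (hfint : ∀ n, Integrable f (mseq n))
    (hae : ∀ᵐ t ∂m, Tendsto (fun n => fseq n t) atTop (𝓝 (f t)))
    (huacseq : ∀ ε : ℝ, 0 < ε → ∃ δ : ℝ, 0 < δ ∧ ∀ E : Set Ω, MeasurableSet E →
      m E < ENNReal.ofReal δ → ∀ n, ∫ x in E, |fseq n x| ∂(mseq n) < ε)
    (huacf : ∀ ε : ℝ, 0 < ε → ∃ δ : ℝ, 0 < δ ∧ ∀ E : Set Ω, MeasurableSet E →
      m E < ENNReal.ofReal δ → ∀ n, ∫ x in E, |f x| ∂(mseq n) < ε)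
    (φ : ℝ → ℝ) (hφ : Continuous φ) (hφ0 : ∀ y, 0 ≤ φ y) (hφle : ∀ y, φ y ≤ |y|)
    (A : Set Ω) (hA : MeasurableSet A) :
    Tendsto (fun n => ∫ x in A, φ (fseq n x) ∂(mseq n)) atTop (𝓝 (∫ x in A, φ (f x) ∂m)) := by
  have hb : ∀ (g : Ω → ℝ) x, |A.indicator (fun x => φ (g x)) x| ≤ |g x| := by
    intro g x
    by_cases hx : x ∈ A
    · rw [Set.indicator_of_mem hx, abs_of_nonneg (hφ0 _)]; exact hφle _
    · rw [Set.indicator_of_notMem hx, abs_zero]; exact abs_nonneg _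
  have hms : ∀ g : Ω → ℝ, Measurable g → Measurable (A.indicator (fun x => φ (g x))) :=
    fun g hg => (hφ.measurable.comp hg).indicator hA
  have hint : ∀ (μ : Measure Ω) (g : Ω → ℝ), Measurable g → Integrable g μ →
      Integrable (A.indicator (fun x => φ (g x))) μ := fun μ g hg hi =>
    hi.mono (hms g hg).aestronglyMeasurable (ae_of_all _ (hb g))
  simp_rw [← integral_indicator hA]
  refine aux_core m mseq hfin hset (A.indicator fun x => φ (f x))
    (fun n => A.indicator fun x => φ (fseq n x)) (fun n => hms _ (hmeas n)) (hms _ hf)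
    (fun x => Set.indicator_nonneg (fun x _ => hφ0 _) x)
    (fun n => hint _ _ (hmeas n) (hfseqint n)) (fun n => hint _ _ hf (hfint n)) ?_ ?_ ?_
  · filter_upwards [hae] with x hx
    by_cases hxA : x ∈ A
    · simp only [Set.indicator_of_mem hxA]
      exact (hφ.tendsto _).comp hx
    · simp only [Set.indicator_of_notMem hxA]
      exact tendsto_const_nhds
  · intro ε hε
    obtain ⟨δ, hδ, H⟩ := huacseq ε hε
    refine ⟨δ, hδ, fun E hE hm n => lt_of_le_of_lt ?_ (H E hE hm n)⟩
    exact integral_mono (hint _ _ (hmeas n) (hfseqint n)).abs.integrableOn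
      (hfseqint n).abs.integrableOn (hb _)
  · intro ε hε
    obtain ⟨δ, hδ, H⟩ := huacf ε hε
    refine ⟨δ, hδ, fun E hE hm n => lt_of_le_of_lt ?_ (H E hE hm n)⟩
    exact integral_mono (hint _ _ hf (hfint n)).abs.integrableOn
      (hfint n).abs.integrableOn (hb _)

/-- Under the hypotheses of the main convergence theorem, the positive and negative
parts also converge: `∫_A fₙ⁺ dmₙ → ∫_A f⁺ dm` and `∫_A fₙ⁻ dmₙ → ∫_A f⁻ dm`
for every Borel set `A`. -/
theorem tendsto_setIntegral_posPart_negPart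
    {Ω : Type*} [TopologicalSpace Ω] [LocallyCompactSpace Ω] [T2Space Ω]
    [MeasurableSpace Ω] [BorelSpace Ω]
    (m : Measure Ω) (mseq : ℕ → Measure Ω)
    [IsFiniteMeasure m] (hfin : ∀ n, IsFiniteMeasure (mseq n))
    (hRadon : m.InnerRegular)
    (f : Ω → ℝ) (fseq : ℕ → Ω → ℝ)
    (hmeas : ∀ n, Measurable (fseq n))
    (hfseqint : ∀ n, Integrable (fseq n) (mseq n))
    (hfint : ∀ n, Integrable f (mseq n))
    (hae : ∀ᵐ t ∂m, Tendsto (fun n => fseq n t) atTop (𝓝 (f t)))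
    (hf : Continuous f)
    (huacseq : ∀ ε : ℝ, 0 < ε → ∃ δ : ℝ, 0 < δ ∧ ∀ n, ∀ A : Set Ω, MeasurableSet A →
      mseq n A < ENNReal.ofReal δ → ∫ x in A, |fseq n x| ∂(mseq n) < ε)
    (huacf : ∀ ε : ℝ, 0 < ε → ∃ δ : ℝ, 0 < δ ∧ ∀ n, ∀ A : Set Ω, MeasurableSet A →
      mseq n A < ENNReal.ofReal δ → ∫ x in A, |f x| ∂(mseq n) < ε)
    (hvague : ∀ g : Ω → ℝ, Continuous g → Tendsto g (cocompact Ω) (𝓝 0) →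
      Tendsto (fun n => ∫ x, g x ∂(mseq n)) atTop (𝓝 (∫ x, g x ∂m)))
    (huac : ∀ ε : ℝ, 0 < ε → ∃ δ : ℝ, 0 < δ ∧ ∀ E : Set Ω, MeasurableSet E →
      m E < ENNReal.ofReal δ → ∀ n, mseq n E < ENNReal.ofReal ε) :
    ∀ A : Set Ω, MeasurableSet A →
      Tendsto (fun n => ∫ x in A, max (fseq n x) 0 ∂(mseq n)) atTop
        (𝓝 (∫ x in A, max (f x) 0 ∂m)) ∧
      Tendsto (fun n => ∫ x in A, max (-(fseq n x)) 0 ∂(mseq n)) atTop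
        (𝓝 (∫ x in A, max (-(f x)) 0 ∂m)) := by
  intro A hA
  have hset := aux_setwise m mseq hfin hRadon hvague huac
  have comb : ∀ F : ℕ → Ω → ℝ, (∀ ε : ℝ, 0 < ε → ∃ δ : ℝ, 0 < δ ∧ ∀ n, ∀ A : Set Ω,
      MeasurableSet A → mseq n A < ENNReal.ofReal δ → ∫ x in A, |F n x| ∂(mseq n) < ε) →
      ∀ ε : ℝ, 0 < ε → ∃ δ : ℝ, 0 < δ ∧ ∀ E : Set Ω, MeasurableSet E →
      m E < ENNReal.ofReal δ → ∀ n, ∫ x in E, |F n x| ∂(mseq n) < ε := by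
    intro F hF ε hε
    obtain ⟨δ, hδ, H⟩ := hF ε hε
    obtain ⟨δ', hδ', H'⟩ := huac δ hδ
    exact ⟨δ', hδ', fun E hE hm n => H n E hE (H' E hE hm n)⟩
  have main := aux_phi m mseq hfin hset f fseq hmeas hf.measurable hfseqint hfint hae
    (comb fseq huacseq) (comb (fun _ => f) huacf)
  exact ⟨main (fun y => max y 0) (by fun_prop) (fun y => le_max_right _ _)
      (fun y => max_le (le_abs_self y) (abs_nonneg y)) A hA,
    main (fun y => max (-y) 0) (by fun_prop) (fun y => le_max_right _ _)
      (fun y => max_le (neg_le_abs y) (abs_nonneg y)) A hA⟩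
end

section
/- Let Ω be a locally compact Hausdorff topological space with Borel σ-algebra B. Let m and m_n (n ∈ ℕ) be finite nonnegative Borel measures on Ω, with m Radon. Let f and f_n (n ∈ ℕ) be Borel measurable real-valued functions on Ω. Suppose that: (i') f_n converges to f in m-measure; (ii) f is continuous; (iii) (f_n) and f have uniformly absolutely continuous (m_n)-integrals on Ω; (iv) (m_n) converges vaguely to m and is uniformly absolutely continuous with respect to m. Then f ∈ L¹(m) and lim_n ∫_A f_n dm_n = ∫_A f dm for every Borel set A. -/
open MeasureTheory Filter Topology


lemma aux_diff_s10 {Ω : Type*} [MeasurableSpace Ω] (μ : Measure Ω) [IsFiniteMeasure μ]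
    (g h : Ω → ℝ) (hg : Measurable g) (hh : Measurable h) (C : ℝ) (hC : 0 ≤ C)
    (hb : ∀ x, |h x| ≤ C) (hg01 : ∀ x, g x ∈ Set.Icc (0 : ℝ) 1)
    (K A U : Set Ω) (hA : MeasurableSet A) (hK : MeasurableSet K) (hU : MeasurableSet U)
    (hKA : K ⊆ A) (hAU : A ⊆ U) (hgK : ∀ x ∈ K, g x = 1) (hgU : ∀ x, x ∉ U → g x = 0) :
    |∫ x, g x * h x ∂μ - ∫ x in A, h x ∂μ| ≤ C * μ.real (U \ K) := by
  have hih : Integrable h μ :=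
    Integrable.of_bound hh.aestronglyMeasurable C (Eventually.of_forall hb)
  have hgh : ∀ x, |g x * h x| ≤ C := fun x => by
    rw [abs_mul, abs_of_nonneg (hg01 x).1]
    nlinarith [hb x, (hg01 x).1, (hg01 x).2, abs_nonneg (h x)]
  have high : Integrable (fun x => g x * h x) μ :=
    Integrable.of_bound (hg.mul hh).aestronglyMeasurable C (Eventually.of_forall hgh)
  rw [← integral_indicator hA, ← integral_sub high (hih.indicator hA)]
  have hUK := hU.diff hK
  have : ∫ x, (U \ K).indicator (fun _ => C) x ∂μ = C * μ.real (U \ K) := by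
    rw [integral_indicator hUK]; simp [mul_comm]
  rw [← this]
  rw [← Real.norm_eq_abs]
  refine norm_integral_le_of_norm_le ((integrable_const C).indicator hUK)
    (Eventually.of_forall fun x => ?_)
  rw [Real.norm_eq_abs]
  by_cases hxK : x ∈ K
  · simp [hgK x hxK, hKA hxK, hxK]
  · by_cases hxU : x ∈ U
    · rw [Set.indicator_of_mem (show x ∈ U \ K from ⟨hxU, hxK⟩)]
      by_cases hxA : x ∈ A
      · rw [Set.indicator_of_mem hxA, show g x * h x - h x = -((1 - g x) * h x) by ring, abs_neg,
          abs_mul, abs_of_nonneg (by linarith [(hg01 x).2])]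
        nlinarith [hb x, (hg01 x).1, (hg01 x).2, abs_nonneg (h x)]
      · rw [Set.indicator_of_notMem hxA, sub_zero]
        exact hgh x
    · have hxA : x ∉ A := fun h => hxU (hAU h)
      simp [hgU x hxU, hxA, hxU]

lemma aux_bdd {Ω : Type*} [TopologicalSpace Ω] [LocallyCompactSpace Ω] [T2Space Ω]
    [MeasurableSpace Ω] [BorelSpace Ω]
    (m : Measure Ω) (mseq : ℕ → Measure Ω)
    [IsFiniteMeasure m] (hfin : ∀ n, IsFiniteMeasure (mseq n))
    (hRadon : m.InnerRegular)
    (hvague : ∀ g : Ω → ℝ, Continuous g → Tendsto g (cocompact Ω) (𝓝 0) →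
      Tendsto (fun n => ∫ x, g x ∂(mseq n)) atTop (𝓝 (∫ x, g x ∂m)))
    (huac : ∀ ε : ℝ, 0 < ε → ∃ δ : ℝ, 0 < δ ∧ ∀ E : Set Ω, MeasurableSet E →
      m E < ENNReal.ofReal δ → ∀ n, mseq n E < ENNReal.ofReal ε)
    (h : Ω → ℝ) (hh : Continuous h) (C : ℝ) (hC : 0 < C) (hb : ∀ x, |h x| ≤ C)
    (A : Set Ω) (hA : MeasurableSet A) :
    Tendsto (fun n => ∫ x in A, h x ∂(mseq n)) atTop (𝓝 (∫ x in A, h x ∂m)) := by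
  rw [Metric.tendsto_atTop]
  intro ε hε
  obtain ⟨δ, hδ, hδ'⟩ := huac (ε / (4 * C)) (by positivity)
  set d := min δ (ε / (4 * C)) with hd
  have hd0 : 0 < d := lt_min hδ (by positivity)
  have hd2 : ENNReal.ofReal (d / 2) ≠ 0 := by
    simp only [ne_eq, ENNReal.ofReal_eq_zero, not_le]; positivity
  obtain ⟨K, hKA, hK, hmK⟩ := hA.exists_isCompact_sdiff_lt (measure_ne_top m A) hd2
  obtain ⟨U, hAU, hU, -, hmU⟩ := hA.exists_isOpen_sdiff_lt (measure_ne_top m A) hd2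
  have hUK : m (U \ K) < ENNReal.ofReal d := by
    have : U \ K ⊆ (U \ A) ∪ (A \ K) := by
      intro x hx
      by_cases hxA : x ∈ A
      · exact Or.inr ⟨hxA, hx.2⟩
      · exact Or.inl ⟨hx.1, hxA⟩
    calc m (U \ K) ≤ m (U \ A) + m (A \ K) := (measure_mono this).trans (measure_union_le _ _)
      _ < ENNReal.ofReal (d / 2) + ENNReal.ofReal (d / 2) := ENNReal.add_lt_add hmU hmK
      _ = ENNReal.ofReal d := by
        rw [← ENNReal.ofReal_add (by positivity) (by positivity)]; congr 1; ring
  have hKm := hK.measurableSet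
  have hUm := hU.measurableSet
  have h1 : m.real (U \ K) < ε / (4 * C) :=
    ENNReal.toReal_lt_of_lt_ofReal
      (hUK.trans_le (ENNReal.ofReal_le_ofReal (min_le_right _ _)))
  have h2 : ∀ n, (mseq n).real (U \ K) < ε / (4 * C) := fun n =>
    ENNReal.toReal_lt_of_lt_ofReal
      (hδ' _ (hUm.diff hKm) (hUK.trans_le (ENNReal.ofReal_le_ofReal (min_le_left _ _))) n)
  obtain ⟨g, hgK, hgU, hgc, hg01⟩ := exists_continuous_one_zero_of_isCompact hK
    hU.isClosed_compl (Set.disjoint_compl_right_iff_subset.2 (hKA.trans hAU))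
  have hD : ∀ μ : Measure Ω, IsFiniteMeasure μ →
      |∫ x, g x * h x ∂μ - ∫ x in A, h x ∂μ| ≤ C * μ.real (U \ K) := fun μ _ =>
    aux_diff_s10 μ g h g.continuous.measurable hh.measurable C hC.le hb hg01 K A U hA hKm hUm hKA hAU
      (fun x hx => hgK hx) (fun x hx => hgU hx)
  have hv := hvague (fun x => g x * h x) (g.continuous.mul hh)
    (HasCompactSupport.is_zero_at_infty (hgc.mul_right))
  rw [Metric.tendsto_atTop] at hv
  obtain ⟨N, hN⟩ := hv (ε / 2) (by positivity)
  refine ⟨N, fun n hn => ?_⟩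
  have e0 := hN n hn
  have e1 := hD m inferInstance
  have e2 := hD (mseq n) (hfin n)
  have hq : C * (ε / (4 * C)) = ε / 4 := by field_simp
  have e3 : C * m.real (U \ K) < ε / 4 := by
    rw [← hq]; exact mul_lt_mul_of_pos_left h1 hC
  have e4 : C * (mseq n).real (U \ K) < ε / 4 := by
    rw [← hq]; exact mul_lt_mul_of_pos_left (h2 n) hC
  rw [Real.dist_eq, abs_lt] at *
  rw [abs_le] at e1 e2
  constructor <;> linarith [e0.1, e0.2, e1.1, e1.2, e2.1, e2.2]

lemma aux_tail {Ω : Type*} [MeasurableSpace Ω] (m : Measure Ω) [IsFiniteMeasure m]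
    (f : Ω → ℝ) (hf : Measurable f) :
    Tendsto (fun N : ℕ => m {x | (N : ℝ) < |f x|}) atTop (𝓝 0) := by
  have := tendsto_measure_iInter_atTop (μ := m) (s := fun N : ℕ => {x | (N : ℝ) < |f x|})
    (fun N => (measurableSet_lt measurable_const hf.abs).nullMeasurableSet)
    (fun a b hab x (hx : (b : ℝ) < |f x|) =>
      lt_of_le_of_lt (by exact_mod_cast hab : (a : ℝ) ≤ b) hx) ⟨0, measure_ne_top _ _⟩
  have he : (⋂ N : ℕ, {x | (N : ℝ) < |f x|}) = ∅ := by
    ext x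
    simp only [Set.mem_iInter, Set.mem_ofPred_eq, Set.mem_empty_iff_false, iff_false, not_forall,
      not_lt]
    exact exists_nat_ge _
  rw [he, measure_empty] at this
  exact this

lemma aux_split {Ω : Type*} [MeasurableSpace Ω] (μ : Measure Ω) [IsFiniteMeasure μ]
    (u v : Ω → ℝ) (hu : Integrable u μ) (hv : Integrable v μ) (E : Set Ω) (hE : MeasurableSet E)
    (c : ℝ) (hc : 0 ≤ c) (h1 : ∀ x ∈ E, |u x| ≤ v x) (h2 : ∀ x, x ∉ E → |u x| ≤ c)
    (A : Set Ω) (hA : MeasurableSet A) :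
    |∫ x in A, u x ∂μ| ≤ ∫ x in E, v x ∂μ + c * μ.real Set.univ := by
  have hi : Integrable (fun x => E.indicator v x + c) μ :=
    (hv.indicator hE).add (integrable_const c)
  have : ∫ x, (E.indicator v x + c) ∂μ = ∫ x in E, v x ∂μ + c * μ.real Set.univ := by
    rw [integral_add (hv.indicator hE) (integrable_const c), integral_indicator hE]
    simp [mul_comm]
  rw [← this, ← integral_indicator hA]
  rw [← Real.norm_eq_abs]
  refine norm_integral_le_of_norm_le hi (Eventually.of_forall fun x => ?_)
  rw [Real.norm_eq_abs]
  have key : |u x| ≤ E.indicator v x + c := by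
    by_cases hx : x ∈ E
    · rw [Set.indicator_of_mem hx]; linarith [h1 x hx]
    · rw [Set.indicator_of_notMem hx]; linarith [h2 x hx]
  by_cases hx : x ∈ A
  · rwa [Set.indicator_of_mem hx]
  · rw [Set.indicator_of_notMem hx, abs_zero]; exact (abs_nonneg _).trans key

/-- Variant of the main convergence theorem with convergence in `m`-measure in place of
`m`-a.e. convergence: `f ∈ L¹(m)` and `∫_A fₙ dmₙ → ∫_A f dm` for every Borel set `A`. -/
theorem tendsto_setIntegral_of_tendstoInMeasure
    {Ω : Type*} [TopologicalSpace Ω] [LocallyCompactSpace Ω] [T2Space Ω]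
    [MeasurableSpace Ω] [BorelSpace Ω]
    (m : Measure Ω) (mseq : ℕ → Measure Ω)
    [IsFiniteMeasure m] (hfin : ∀ n, IsFiniteMeasure (mseq n))
    (hRadon : m.InnerRegular)
    (f : Ω → ℝ) (fseq : ℕ → Ω → ℝ)
    (hmeas : ∀ n, Measurable (fseq n))
    (hfseqint : ∀ n, Integrable (fseq n) (mseq n))
    (hfint : ∀ n, Integrable f (mseq n))
    -- (i') convergence in m-measure
    (hmeasconv : ∀ η : ℝ, 0 < η →
      Tendsto (fun n => m {t | η < |fseq n t - f t|}) atTop (𝓝 0))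
    (hf : Continuous f)
    (huacseq : ∀ ε : ℝ, 0 < ε → ∃ δ : ℝ, 0 < δ ∧ ∀ n, ∀ A : Set Ω, MeasurableSet A →
      mseq n A < ENNReal.ofReal δ → ∫ x in A, |fseq n x| ∂(mseq n) < ε)
    (huacf : ∀ ε : ℝ, 0 < ε → ∃ δ : ℝ, 0 < δ ∧ ∀ n, ∀ A : Set Ω, MeasurableSet A →
      mseq n A < ENNReal.ofReal δ → ∫ x in A, |f x| ∂(mseq n) < ε)
    (hvague : ∀ g : Ω → ℝ, Continuous g → Tendsto g (cocompact Ω) (𝓝 0) →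
      Tendsto (fun n => ∫ x, g x ∂(mseq n)) atTop (𝓝 (∫ x, g x ∂m)))
    (huac : ∀ ε : ℝ, 0 < ε → ∃ δ : ℝ, 0 < δ ∧ ∀ E : Set Ω, MeasurableSet E →
      m E < ENNReal.ofReal δ → ∀ n, mseq n E < ENNReal.ofReal ε) :
    Integrable f m ∧
      ∀ A : Set Ω, MeasurableSet A →
        Tendsto (fun n => ∫ x in A, fseq n x ∂(mseq n)) atTop (𝓝 (∫ x in A, f x ∂m)) := by
  have hB := aux_bdd m mseq hfin hRadon hvague huac
  have hfm := hf.measurable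
  -- total masses converge
  have hmass : Tendsto (fun n => (mseq n).real Set.univ) atTop (𝓝 (m.real Set.univ)) := by
    have := hB (fun _ => 1) continuous_const 1 one_pos (by simp) Set.univ MeasurableSet.univ
    simpa using this
  set B := m.real Set.univ + 1 with hBdef
  have hB0 : 0 < B := by have := measureReal_nonneg (μ := m) (s := Set.univ); linarith
  have hmassB : ∀ᶠ n in atTop, (mseq n).real Set.univ ≤ B :=
    (hmass.eventually (gt_mem_nhds (show m.real Set.univ < B by linarith))).mono fun _ h => h.le
  -- uniform tails
  have hEm : ∀ N : ℕ, MeasurableSet {x | (N : ℝ) < |f x|} := fun N =>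
    measurableSet_lt measurable_const hfm.abs
  have htail : ∀ ε : ℝ, 0 < ε → ∃ N0 : ℕ, ∀ N ≥ N0, ∀ n,
      ∫ x in {x | (N : ℝ) < |f x|}, |f x| ∂(mseq n) < ε := by
    intro ε hε
    obtain ⟨δ, hδ, h1⟩ := huacf ε hε
    obtain ⟨δ', hδ', h2⟩ := huac δ hδ
    have := (aux_tail m f hfm).eventually (gt_mem_nhds (ENNReal.ofReal_pos.2 hδ'))
    obtain ⟨N0, hN0⟩ := eventually_atTop.1 this
    exact ⟨N0, fun N hN n => h1 n _ (hEm N) (h2 _ (hEm N) (hN0 N hN) n)⟩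
  -- truncations
  set T : ℕ → Ω → ℝ := fun N x => max (-(N : ℝ)) (min (f x) N) with hT
  have hTc : ∀ N, Continuous (T N) := fun N => by simp only [hT]; fun_prop
  have hTN : ∀ N x, |T N x| ≤ (N : ℝ) := fun N x => by
    have : (0 : ℝ) ≤ N := Nat.cast_nonneg N
    simp only [hT, abs_le]
    exact ⟨le_max_left _ _, max_le (by linarith) (min_le_right _ _)⟩
  have hTeq : ∀ (N : ℕ) x, |f x| ≤ (N : ℝ) → T N x = f x := fun N x h => by
    rw [abs_le] at h
    simp only [hT]
    rw [min_eq_left h.2, max_eq_right h.1]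
  have hTf : ∀ N x, |T N x| ≤ |f x| := fun N x => by
    rcases le_or_gt (|f x|) N with h | h
    · rw [hTeq N x h]
    · exact (hTN N x).trans h.le
  have hTd : ∀ N x, |f x - T N x| ≤ |f x| := fun N x => by
    have h0 : (0 : ℝ) ≤ N := Nat.cast_nonneg N
    rcases le_total 0 (f x) with h | h
    · have h1 : 0 ≤ T N x := le_max_of_le_right (le_min h h0)
      have h2 : T N x ≤ f x := by
        have := hTf N x
        rwa [abs_of_nonneg h1, abs_of_nonneg h] at this
      rw [abs_of_nonneg h, abs_of_nonneg (by linarith)]; linarith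
    · have h1 : T N x ≤ 0 := max_le (by linarith) ((min_le_left _ _).trans h)
      have h2 : f x ≤ T N x := by
        have := hTf N x
        rw [abs_of_nonpos h1, abs_of_nonpos h] at this
        linarith
      rw [abs_of_nonpos h, abs_of_nonpos (by linarith)]; linarith
  have hTlim : ∀ x, Tendsto (fun N => T N x) atTop (𝓝 (f x)) := fun x => by
    obtain ⟨N0, hN0⟩ := exists_nat_ge (|f x|)
    refine tendsto_const_nhds.congr' ?_
    filter_upwards [eventually_ge_atTop N0] with N hN
    exact (hTeq N x (hN0.trans (by exact_mod_cast hN))).symm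
  have hTi : ∀ (N : ℕ) (μ : Measure Ω), IsFiniteMeasure μ → Integrable (T N) μ := fun N μ _ =>
    Integrable.of_bound (hTc N).measurable.aestronglyMeasurable N (Eventually.of_forall (hTN N))
  have hTconv : ∀ (N : ℕ) A, MeasurableSet A →
      Tendsto (fun n => ∫ x in A, T N x ∂(mseq n)) atTop (𝓝 (∫ x in A, T N x ∂m)) :=
    fun N A hA => hB (T N) (hTc N) (N + 1) (by positivity) (fun x => by linarith [hTN N x]) A hA
  -- integrability of the limit
  have hint : Integrable f m := by
    obtain ⟨N0, hN0⟩ := htail 1 one_pos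
    set M : ℝ := 1 + N0 * B with hM
    have hbound : ∀ N, ∫ x, |T N x| ∂m ≤ M := by
      intro N
      have hc := hB (fun x => |T N x|) (hTc N).abs (N + 1) (by positivity)
        (fun x => by rw [abs_abs]; linarith [hTN N x]) Set.univ MeasurableSet.univ
      simp only [Measure.restrict_univ] at hc
      refine le_of_tendsto hc ?_
      filter_upwards [hmassB] with n hn
      have h3 := aux_split (mseq n) (fun x => |T N x|) (fun x => |f x|)
        (hTi N _ (hfin n)).abs (hfint n).abs _ (hEm N0) N0 (Nat.cast_nonneg _)
        (fun x _ => by rw [abs_abs]; exact hTf N x)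
        (fun x hx => by
          rw [abs_abs]; exact (hTf N x).trans (not_lt.1 hx)) Set.univ MeasurableSet.univ
      simp only [Measure.restrict_univ] at h3
      have h4 := hN0 N0 le_rfl n
      have h5 : (N0 : ℝ) * (mseq n).real Set.univ ≤ N0 * B :=
        mul_le_mul_of_nonneg_left hn (Nat.cast_nonneg _)
      linarith [le_abs_self (∫ x, |T N x| ∂(mseq n))]
    refine ⟨hfm.aestronglyMeasurable, ?_⟩
    have hle : ∫⁻ x, ‖f x‖ₑ ∂m ≤ liminf (fun N => ∫⁻ x, ‖T N x‖ₑ ∂m) atTop := by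
      have : ∀ x, ‖f x‖ₑ = liminf (fun N => ‖T N x‖ₑ) atTop := fun x =>
        ((hTlim x).enorm.liminf_eq).symm
      simp_rw [this]
      exact lintegral_liminf_le (fun N => (hTc N).measurable.enorm)
    have hle2 : liminf (fun N => ∫⁻ x, ‖T N x‖ₑ ∂m) atTop ≤ ENNReal.ofReal M := by
      refine liminf_le_of_le (by isBoundedDefault) fun b hb => ?_
      obtain ⟨N, hN⟩ := hb.exists
      refine hN.trans ?_
      rw [← ofReal_integral_norm_eq_lintegral_enorm (hTi N m inferInstance)]
      exact ENNReal.ofReal_le_ofReal (hbound N)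
    exact (hle.trans hle2).trans_lt ENNReal.ofReal_lt_top
  refine ⟨hint, fun A hA => ?_⟩
  -- step 1: convergence of the integrals of `f`
  have hstep1 : Tendsto (fun n => ∫ x in A, f x ∂(mseq n)) atTop (𝓝 (∫ x in A, f x ∂m)) := by
    rw [Metric.tendsto_atTop]
    intro ε hε
    obtain ⟨N0, hN0⟩ := htail (ε / 3) (by positivity)
    have hTm : Tendsto (fun N => ∫ x in A, T N x ∂m) atTop (𝓝 (∫ x in A, f x ∂m)) :=
      tendsto_integral_of_dominated_convergence (fun x => |f x|)
        (fun N => (hTc N).measurable.aestronglyMeasurable) hint.abs.integrableOn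
        (fun N => Eventually.of_forall (hTf N)) (Eventually.of_forall hTlim)
    rw [Metric.tendsto_atTop] at hTm
    obtain ⟨N1, hN1⟩ := hTm (ε / 3) (by positivity)
    set N := max N0 N1
    have e1 := hN1 N (le_max_right _ _)
    obtain ⟨n0, hn0⟩ := Metric.tendsto_atTop.1 (hTconv N A hA) (ε / 3) (by positivity)
    refine ⟨n0, fun n hn => ?_⟩
    have e2 := hn0 n hn
    have e3 := hN0 N (le_max_left _ _) n
    have e4 := aux_split (mseq n) (fun x => f x - T N x) (fun x => |f x|)
        ((hfint n).sub (hTi N _ (hfin n))) (hfint n).abs _ (hEm N) 0 le_rfl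
        (fun x _ => hTd N x)
        (fun x hx => by rw [hTeq N x (not_lt.1 hx)]; simp) A hA
    rw [integral_sub (hfint n).integrableOn (hTi N _ (hfin n)).integrableOn, zero_mul,
      add_zero] at e4
    rw [Real.dist_eq, abs_lt] at *
    rw [abs_le] at e4
    constructor <;> linarith [e1.1, e1.2, e2.1, e2.2, e4.1, e4.2]
  -- step 2: the difference tends to zero
  have hstep2 : Tendsto (fun n => ∫ x in A, (fseq n x - f x) ∂(mseq n)) atTop (𝓝 0) := by
    rw [Metric.tendsto_atTop]
    intro ε hε
    obtain ⟨δ1, hδ1, h1⟩ := huacseq (ε / 4) (by positivity)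
    obtain ⟨δ2, hδ2, h2⟩ := huacf (ε / 4) (by positivity)
    obtain ⟨δ, hδ, h3⟩ := huac (min δ1 δ2) (lt_min hδ1 hδ2)
    have hη : 0 < ε / (4 * B) := by positivity
    have hev := (hmeasconv _ hη).eventually (gt_mem_nhds (ENNReal.ofReal_pos.2 hδ))
    obtain ⟨n0, hn0⟩ := eventually_atTop.1 (hev.and hmassB)
    refine ⟨n0, fun n hn => ?_⟩
    obtain ⟨hm1, hm2⟩ := hn0 n hn
    have hE : MeasurableSet {t | ε / (4 * B) < |fseq n t - f t|} :=
      measurableSet_lt measurable_const ((hmeas n).sub hfm).abs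
    have h4 := h3 _ hE hm1 n
    have e1 := h1 n _ hE (h4.trans_le (ENNReal.ofReal_le_ofReal (min_le_left _ _)))
    have e2 := h2 n _ hE (h4.trans_le (ENNReal.ofReal_le_ofReal (min_le_right _ _)))
    have e3 := aux_split (mseq n) (fun x => fseq n x - f x) (fun x => |fseq n x| + |f x|)
      ((hfseqint n).sub (hfint n)) ((hfseqint n).abs.add (hfint n).abs) _ hE _ hη.le
      (fun x _ => abs_sub _ _) (fun x hx => not_lt.1 hx) A hA
    rw [integral_add (hfseqint n).abs.integrableOn (hfint n).abs.integrableOn] at e3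
    have e4 : ε / (4 * B) * (mseq n).real Set.univ ≤ ε / 4 := by
      calc ε / (4 * B) * (mseq n).real Set.univ ≤ ε / (4 * B) * B :=
            mul_le_mul_of_nonneg_left hm2 hη.le
        _ = ε / 4 := by field_simp
    rw [Real.dist_eq, sub_zero]
    linarith
  have := hstep2.add hstep1
  rw [zero_add] at this
  refine this.congr fun n => ?_
  rw [integral_sub (hfseqint n).integrableOn (hfint n).integrableOn, sub_add_cancel]
end

section
/- Let Ω be a locally compact Hausdorff topological space with Borel σ-algebra B. Let m and m_n (n ∈ ℕ) be finite nonnegative Borel measures on Ω, with m Radon. Let f and f_n (n ∈ ℕ) be Borel measurable real-valued functions on Ω. Suppose that: (i) f_n → f m-almost everywhere; (ii) f is continuous and bounded; (iii) (f_n) has uniformly absolutely continuous (m_n)-integrals on Ω; (iv) (m_n) converges vaguely to m and is uniformly absolutely continuous with respect to m. Then lim_n ∫_A f_n dm_n = ∫_A f dm for every Borel set A. -/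
open MeasureTheory Filter Topology

lemma aux_indicator_bound {Ω : Type*} [TopologicalSpace Ω] [MeasurableSpace Ω] [BorelSpace Ω]
    (μ : Measure Ω) [IsFiniteMeasure μ] (f g : Ω → ℝ) (hf : Continuous f) (hg : Continuous g)
    (C : ℝ) (hC : ∀ t, |f t| ≤ C) (hg01 : ∀ t, 0 ≤ g t ∧ g t ≤ 1)
    (A K U : Set Ω) (hA : MeasurableSet A) (hK : MeasurableSet K) (hU : MeasurableSet U)
    (hKA : K ⊆ A) (hAU : A ⊆ U) (hgK : ∀ t ∈ K, g t = 1) (hgU : ∀ t, t ∉ U → g t = 0) :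
    |∫ x in A, f x ∂μ - ∫ x, g x * f x ∂μ| ≤ C * μ.real (U \ K) := by
  have hfi : Integrable f μ :=
    Integrable.of_bound hf.measurable.aestronglyMeasurable C (Eventually.of_forall hC)
  have hgf : ∀ t, |g t * f t| ≤ C := by
    intro t
    rw [abs_mul, abs_of_nonneg (hg01 t).1]
    have := hC t
    have h2 := (hg01 t).2
    nlinarith [abs_nonneg (f t), (hg01 t).1]
  have hgi : Integrable (fun x => g x * f x) μ :=
    Integrable.of_bound (hg.mul hf).measurable.aestronglyMeasurable C (Eventually.of_forall hgf)
  rw [← integral_indicator hA, ← integral_sub (hfi.indicator hA) hgi, ← Real.norm_eq_abs]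
  have hb : Integrable ((U \ K).indicator (fun _ => C)) μ :=
    (integrable_const C).indicator (hU.diff hK)
  refine (norm_integral_le_of_norm_le hb (Eventually.of_forall ?_)).trans (le_of_eq ?_)
  · intro t
    rw [Real.norm_eq_abs]
    by_cases hk : t ∈ K
    · simp [hk, hKA hk, hgK t hk]
    · by_cases hu : t ∈ U
      · simp only [Set.mem_sdiff, hu, hk, not_false_eq_true, and_self, Set.indicator_of_mem]
        by_cases ha : t ∈ A
        · simp only [ha, Set.indicator_of_mem]
          have e : f t - g t * f t = (1 - g t) * f t := by ring
          rw [e, abs_mul, abs_of_nonneg (by linarith [(hg01 t).2])]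
          nlinarith [abs_nonneg (f t), (hg01 t).1, hC t]
        · simpa [ha, abs_mul] using hgf t
      · have ha : t ∉ A := fun h => hu (hAU h)
        simp [hu, ha, hgU t hu]
  · rw [integral_indicator (hU.diff hK), setIntegral_const, smul_eq_mul, mul_comm]

lemma aux_step1 {Ω : Type*} [TopologicalSpace Ω] [LocallyCompactSpace Ω] [T2Space Ω]
    [MeasurableSpace Ω] [BorelSpace Ω]
    (m : Measure Ω) (mseq : ℕ → Measure Ω)
    [IsFiniteMeasure m] (hfin : ∀ n, IsFiniteMeasure (mseq n))
    (hRadon : m.InnerRegular)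
    (f : Ω → ℝ) (hf : Continuous f) (C : ℝ) (hC0 : 0 < C) (hC : ∀ t, |f t| ≤ C)
    (hvague : ∀ g : Ω → ℝ, Continuous g → Tendsto g (cocompact Ω) (𝓝 0) →
      Tendsto (fun n => ∫ x, g x ∂(mseq n)) atTop (𝓝 (∫ x, g x ∂m)))
    (huac : ∀ ε : ℝ, 0 < ε → ∃ δ : ℝ, 0 < δ ∧ ∀ E : Set Ω, MeasurableSet E →
      m E < ENNReal.ofReal δ → ∀ n, mseq n E < ENNReal.ofReal ε)
    (A : Set Ω) (hA : MeasurableSet A) :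
      Tendsto (fun n => ∫ x in A, f x ∂(mseq n)) atTop (𝓝 (∫ x in A, f x ∂m)) := by
  rw [Metric.tendsto_atTop]
  intro ε hε
  have hη : 0 < ε / (4 * C) := by positivity
  obtain ⟨δ, hδ, hδ'⟩ := huac _ hη
  set d := min δ (ε / (4 * C)) with hd
  have hd0 : 0 < d := lt_min hδ hη
  have hd2 : ENNReal.ofReal (d / 2) ≠ 0 := by
    simpa using hd0
  obtain ⟨K, hKA, hK, hKm⟩ := hA.exists_isCompact_sdiff_lt (μ := m) (measure_ne_top _ _) hd2
  obtain ⟨L, hLA, hL, hLm⟩ := hA.compl.exists_isCompact_sdiff_lt (μ := m) (measure_ne_top _ _) hd2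
  have hKM := hK.measurableSet
  have hLM := hL.measurableSet
  have hAU : A ⊆ Lᶜ := fun x hx hxL => hLA hxL hx
  have hUK : m (Lᶜ \ K) < ENNReal.ofReal d := by
    have hsub : Lᶜ \ K ⊆ (A \ K) ∪ (Aᶜ \ L) := by
      intro x hx
      by_cases h : x ∈ A
      · exact Or.inl ⟨h, hx.2⟩
      · exact Or.inr ⟨h, hx.1⟩
    calc m (Lᶜ \ K) ≤ m (A \ K) + m (Aᶜ \ L) := (measure_mono hsub).trans (measure_union_le _ _)
      _ < ENNReal.ofReal (d/2) + ENNReal.ofReal (d/2) := ENNReal.add_lt_add hKm hLm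
      _ = ENNReal.ofReal d := by
        rw [← ENNReal.ofReal_add (by positivity) (by positivity), add_halves]
  obtain ⟨g, hg1, hg0, hgc, hg01⟩ := exists_continuous_one_zero_of_isCompact hK hL.isClosed
    (Set.disjoint_left.2 fun x hx hxL => hAU (hKA hx) hxL)
  have hcs : HasCompactSupport (fun x => g x * f x) := hgc.mul_right
  have hv := hvague (fun x => g x * f x) (g.continuous.mul hf) hcs.is_zero_at_infty
  rw [Metric.tendsto_atTop] at hv
  obtain ⟨N, hN⟩ := hv (ε / 4) (by positivity)
  have key : ∀ μ : Measure Ω, IsFiniteMeasure μ → μ (Lᶜ \ K) < ENNReal.ofReal (ε / (4 * C)) →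
      |∫ x in A, f x ∂μ - ∫ x, g x * f x ∂μ| ≤ ε / 4 := by
    intro μ _ hμ
    refine (aux_indicator_bound μ f g hf g.continuous C hC (fun t => ⟨(hg01 t).1, (hg01 t).2⟩) A K Lᶜ hA hKM
      hLM.compl hKA hAU (fun t ht => hg1 ht) (fun t ht => hg0 (by simpa using ht))).trans ?_
    have : μ.real (Lᶜ \ K) ≤ ε / (4 * C) := ENNReal.toReal_le_of_le_ofReal hη.le hμ.le
    calc C * μ.real (Lᶜ \ K) ≤ C * (ε / (4 * C)) := by gcongr
      _ = ε / 4 := by field_simp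
  refine ⟨N, fun n hn => ?_⟩
  have h1 := hN n hn
  have h2 := key m inferInstance (hUK.trans_le (ENNReal.ofReal_le_ofReal (min_le_right _ _)))
  have h3 := key (mseq n) (hfin n) (hδ' _ (hLM.compl.diff hKM)
    (hUK.trans_le (ENNReal.ofReal_le_ofReal (min_le_left _ _))) n)
  rw [Real.dist_eq] at h1 ⊢
  rw [abs_le] at h2 h3
  rw [abs_lt] at h1 ⊢
  constructor <;> linarith [h1.1, h1.2, h2.1, h2.2, h3.1, h3.2]

/-- Variant of the main convergence theorem for a bounded continuous limit `f`: if
`fₙ → f` `m`-a.e., `(fₙ)` has uniformly absolutely continuous `(mₙ)`-integrals, and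
`(mₙ)` is vaguely convergent to the finite Radon measure `m` and uniformly absolutely
continuous with respect to `m`, then `∫_A fₙ dmₙ → ∫_A f dm` for every Borel set `A`. -/
theorem tendsto_setIntegral_of_vague_bounded
    {Ω : Type*} [TopologicalSpace Ω] [LocallyCompactSpace Ω] [T2Space Ω]
    [MeasurableSpace Ω] [BorelSpace Ω]
    (m : Measure Ω) (mseq : ℕ → Measure Ω)
    [IsFiniteMeasure m] (hfin : ∀ n, IsFiniteMeasure (mseq n))
    (hRadon : m.InnerRegular)
    (f : Ω → ℝ) (fseq : ℕ → Ω → ℝ)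
    (hmeas : ∀ n, Measurable (fseq n))
    (hfseqint : ∀ n, Integrable (fseq n) (mseq n))
    -- (i) pointwise a.e. convergence
    (hae : ∀ᵐ t ∂m, Tendsto (fun n => fseq n t) atTop (𝓝 (f t)))
    -- (ii) f continuous and bounded
    (hf : Continuous f) (hfb : ∃ C : ℝ, ∀ t, |f t| ≤ C)
    -- (iii) uniformly absolutely continuous (mₙ)-integrals of (fₙ)
    (huacseq : ∀ ε : ℝ, 0 < ε → ∃ δ : ℝ, 0 < δ ∧ ∀ n, ∀ A : Set Ω, MeasurableSet A →
      mseq n A < ENNReal.ofReal δ → ∫ x in A, |fseq n x| ∂(mseq n) < ε)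
    -- (iv) vague convergence and uniform absolute continuity of the measures
    (hvague : ∀ g : Ω → ℝ, Continuous g → Tendsto g (cocompact Ω) (𝓝 0) →
      Tendsto (fun n => ∫ x, g x ∂(mseq n)) atTop (𝓝 (∫ x, g x ∂m)))
    (huac : ∀ ε : ℝ, 0 < ε → ∃ δ : ℝ, 0 < δ ∧ ∀ E : Set Ω, MeasurableSet E →
      m E < ENNReal.ofReal δ → ∀ n, mseq n E < ENNReal.ofReal ε) :
    ∀ A : Set Ω, MeasurableSet A →
      Tendsto (fun n => ∫ x in A, fseq n x ∂(mseq n)) atTop (𝓝 (∫ x in A, f x ∂m)) := by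
  intro A hA
  obtain ⟨C₀, hC₀⟩ := hfb
  set C := |C₀| + 1 with hCdef
  have hC0 : 0 < C := by positivity
  have hC : ∀ t, |f t| ≤ C := fun t => (hC₀ t).trans (by linarith [le_abs_self C₀])
  have hs1 := aux_step1 m mseq hfin hRadon f hf C hC0 hC hvague huac A hA
  have hs2 := aux_step1 m mseq hfin hRadon (fun _ => 1) continuous_const 1 one_pos (by simp)
    hvague huac Set.univ MeasurableSet.univ
  simp only [setIntegral_const, smul_eq_mul, mul_one] at hs2
  set M := m.real Set.univ + 1 with hM
  have hM0 : 0 < M := by positivity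
  have hbd : ∀ᶠ n in atTop, (mseq n).real Set.univ < M := hs2.eventually_lt_const (by linarith)
  have hdiff : Tendsto (fun n => ∫ x in A, fseq n x ∂(mseq n) - ∫ x in A, f x ∂(mseq n))
      atTop (𝓝 0) := by
    rw [Metric.tendsto_atTop']
    intro ε hε
    obtain ⟨δ₁, hδ₁, h₁⟩ := huacseq (ε / 4) (by positivity)
    have hη : 0 < min δ₁ (ε / (4 * C)) := lt_min hδ₁ (by positivity)
    obtain ⟨δ₂, hδ₂, h₂⟩ := huac _ hη
    obtain ⟨E, hE, hmE, hunif⟩ := tendstoUniformlyOn_of_ae_tendsto' (μ := m)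
      (fun n => (hmeas n).stronglyMeasurable) hf.measurable.stronglyMeasurable hae
      (half_pos hδ₂)
    have hmE' : m E < ENNReal.ofReal δ₂ :=
      hmE.trans_lt ((ENNReal.ofReal_lt_ofReal_iff hδ₂).2 (half_lt_self hδ₂))
    rw [Metric.tendstoUniformlyOn_iff] at hunif
    have hu := hunif (ε / (4 * M)) (by positivity)
    obtain ⟨N, hN⟩ := eventually_atTop.1 (hu.and hbd)
    refine ⟨N, fun n hn => ?_⟩
    obtain ⟨hu, hb⟩ := hN n hn.le
    have := hfin n
    have hnE := h₂ E hE hmE' n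
    have hfi : Integrable f (mseq n) :=
      Integrable.of_bound hf.measurable.aestronglyMeasurable C (Eventually.of_forall hC)
    have hi := hfseqint n
    have hE1 : ∫ x in E, |fseq n x| ∂(mseq n) < ε / 4 :=
      h₁ n E hE (hnE.trans_le (ENNReal.ofReal_le_ofReal (min_le_left _ _)))
    have hE2 : (mseq n).real E ≤ ε / (4 * C) :=
      ENNReal.toReal_le_of_le_ofReal (by positivity)
        (hnE.le.trans (ENNReal.ofReal_le_ofReal (min_le_right _ _)))
    have hE3 : C * (mseq n).real E ≤ ε / 4 := by
      calc C * (mseq n).real E ≤ C * (ε / (4 * C)) := by gcongr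
        _ = ε / 4 := by field_simp
    have hE4 : ε / (4 * M) * (mseq n).real Set.univ ≤ ε / 4 := by
      calc ε / (4 * M) * (mseq n).real Set.univ ≤ ε / (4 * M) * M := by gcongr
        _ = ε / 4 := by field_simp
    rw [dist_zero_right, ← integral_sub hi.integrableOn hfi.integrableOn]
    have hi1 : Integrable (E.indicator fun x => |fseq n x|) (mseq n) := hi.abs.indicator hE
    have hi2 : Integrable (E.indicator fun _ => C) (mseq n) := (integrable_const C).indicator hE
    have hi3 : Integrable (fun _ : Ω => ε / (4 * M)) (mseq n) := integrable_const _
    have hi12 : Integrable (fun x => E.indicator (fun x => |fseq n x|) x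
        + E.indicator (fun _ => C) x) (mseq n) := hi1.add hi2
    have hpt : ∀ x, |fseq n x - f x| ≤
        (E.indicator (fun x => |fseq n x|) x + E.indicator (fun _ => C) x) + ε / (4 * M) := by
      intro x
      have hp : 0 < ε / (4 * M) := by positivity
      by_cases hx : x ∈ E
      · simp only [hx, Set.indicator_of_mem]
        have := abs_sub (fseq n x) (f x)
        linarith [hC x]
      · simp only [hx, not_false_eq_true, Set.indicator_of_notMem]
        have := hu x hx
        rw [dist_comm, Real.dist_eq] at this
        linarith
    calc ‖∫ x in A, (fseq n x - f x) ∂(mseq n)‖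
        ≤ ∫ x in A, ‖fseq n x - f x‖ ∂(mseq n) := norm_integral_le_integral_norm _
      _ ≤ ∫ x, ‖fseq n x - f x‖ ∂(mseq n) :=
          setIntegral_le_integral (hi.sub hfi).norm (Eventually.of_forall fun _ => norm_nonneg _)
      _ ≤ ∫ x, ((E.indicator (fun x => |fseq n x|) x + E.indicator (fun _ => C) x)
            + ε / (4 * M)) ∂(mseq n) :=
          integral_mono (hi.sub hfi).norm (hi12.add hi3) hpt
      _ = ∫ x in E, |fseq n x| ∂(mseq n) + C * (mseq n).real E
            + ε / (4 * M) * (mseq n).real Set.univ := by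
          rw [integral_add hi12 hi3, integral_add hi1 hi2, integral_indicator hE,
            integral_indicator hE, setIntegral_const, integral_const, smul_eq_mul, smul_eq_mul,
            mul_comm C, mul_comm (ε / (4 * M))]
      _ < ε := by linarith
  simpa using hdiff.add hs1
end
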